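/- Let m be a non-negative integer and let x > 0 be real. Then ∑_{n=1}^∞ σ_{2m+1/2}(n) n^{−1/2} e^{−2π√(2nx)} sin(π/4 − 2π√(2nx)) = ( 2π√x + (2m)!/(√2·(2πx)^{2m+1}) )·ζ(−1/2−2m) + (1/√2)·ζ(1/2)·ζ(−2m) + (√π·(2m)!/(2π)^{2m+3/2}) ∑_{n=1}^∞ σ_{2m+1/2}(n)·( (x−in)^{−(2m+1)} + (x+in)^{−(2m+1)} ). -/

import Mathlib

open Complex Finset
open scoped Real BigOperators Classical

/-- Generalized divisor sum `σ_r(n) = ∑_{d ∣ n} d^r` with real exponent. -/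
noncomputable def rsigma (r : ℝ) (n : ℕ) : ℝ := ∑ d ∈ n.divisors, (d : ℝ) ^ r

/-!
Both sides come from Poisson summation on the half-line, applied after damping by `e^{-ut}` and
followed by `u → 0⁺`. For `∑ e^{-a/n} / √n` the dual series `heatDual a`, a sum of values of the
Laplace transform of `e^{-a/t} / √t` on `2πiℤ`, consists of the exponential–sine terms, and it
equals `∑ (e^{-a/n} - 1) / √n + ζ(1/2) + 2√(πa)`. Now put `a = 2πxn`, multiply by `n^{s-1}` and sum
over `n`. The sums `∑ n^{s-1} e^{-un}` are again evaluated by Poisson summation, as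
`Γ(s) u^{-s} + ζ(1-s) + Γ(s) ∑ pairedPow s u (2πk)`, and the remaining integral of
`t^{s-1} heatDual (2πxt)` is `(2πx)^{-s} Γ(s) ζ(1/2-s)`. Collecting the terms with `n = dk` in the
two double series produces the divisor sums. At `s = 2m + 1` the cosine in `pairedPow` vanishes.
-/

section

open MeasureTheory Filter Topology Asymptotics ComplexConjugate

theorem eqOn_re_pos_of_eq_ofReal {f g : ℂ → ℂ} (hf : DifferentiableOn ℂ f {z | 0 < z.re})
    (hg : DifferentiableOn ℂ g {z | 0 < z.re}) (hfg : ∀ r : ℝ, 1 < r → f r = g r) :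
    Set.EqOn f g {z | 0 < z.re} := by
  have hopen : IsOpen {z : ℂ | 0 < z.re} := isOpen_lt continuous_const continuous_re
  have hmaps : Tendsto ((↑) : ℝ → ℂ) (𝓝[>] 2) (𝓝[≠] ((2 : ℝ) : ℂ)) :=
    tendsto_nhdsWithin_of_tendsto_nhds_of_eventually_within _
      (continuous_ofReal.continuousAt.tendsto.mono_left nhdsWithin_le_nhds)
      (eventually_mem_nhdsWithin.mono fun r (hr : 2 < r) ↦ ofReal_injective.ne hr.ne')
  refine (hf.analyticOnNhd hopen).eqOn_of_preconnected_of_frequently_eq (hg.analyticOnNhd hopen)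
    (convex_halfSpace_re_gt 0).isPreconnected (z₀ := ((2 : ℝ) : ℂ)) (by simp) ?_
  refine hmaps.frequently (Eventually.frequently ?_)
  filter_upwards [self_mem_nhdsWithin] with r (hr : 2 < r)
  exact hfg r (by linarith)

-- The left-hand side is the complex moment generating function of the measure `w(t) dt`, which is
-- known to be holomorphic, so it suffices to compare on the positive real axis.
theorem integral_mul_cexp_eq_of_eq_ofReal {w : ℝ → ℝ} (hw : Measurable w)
    (hw0 : ∀ t > 0, 0 ≤ w t) {H : ℂ → ℂ} (hH : DifferentiableOn ℂ H {z | 0 < z.re})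
    (hint : ∀ r : ℝ, 0 < r → IntegrableOn (fun t ↦ w t * Real.exp (-(r * t))) (Set.Ioi 0))
    (heq : ∀ r : ℝ, 0 < r → ((∫ t in Set.Ioi 0, w t * Real.exp (-(r * t)) : ℝ) : ℂ) = H r)
    {z : ℂ} (hz : 0 < z.re) :
    ∫ t in Set.Ioi (0 : ℝ), (w t : ℂ) * cexp (-(z * t)) = H z := by
  set ν : Measure ℝ := (volume.restrict (Set.Ioi 0)).withDensity fun t ↦ ENNReal.ofReal (w t)
    with hν
  have hmgf : ∀ z : ℂ, ProbabilityTheory.complexMGF (fun t ↦ -t) ν z =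
      ∫ t in Set.Ioi (0 : ℝ), (w t : ℂ) * cexp (-(z * t)) := fun z ↦ by
    rw [ProbabilityTheory.complexMGF, hν, integral_withDensity_eq_integral_toReal_smul
      hw.ennreal_ofReal (by simp)]
    refine setIntegral_congr_fun measurableSet_Ioi fun t ht ↦ ?_
    simp [ENNReal.toReal_ofReal (hw0 t ht)]
  have hset : Set.Ioi 0 ⊆ ProbabilityTheory.integrableExpSet (fun t : ℝ ↦ -t) ν := fun r hr ↦ by
    rw [ProbabilityTheory.integrableExpSet, Set.mem_ofPred_eq, hν,
      integrable_withDensity_iff_integrable_smul' hw.ennreal_ofReal (by simp)]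
    refine (hint r hr).congr_fun (fun t ht ↦ ?_) measurableSet_Ioi
    simp [ENNReal.toReal_ofReal (hw0 t ht)]
  have hL : DifferentiableOn ℂ (ProbabilityTheory.complexMGF (fun t ↦ -t) ν) {z | 0 < z.re} :=
    ProbabilityTheory.differentiableOn_complexMGF.mono fun z hz ↦
      interior_mono hset (by rwa [interior_Ioi])
  rw [← hmgf]
  refine eqOn_re_pos_of_eq_ofReal hL hH (fun r hr ↦ ?_) hz
  rw [hmgf, ← heq r (by linarith), ← integral_complex_ofReal]
  push_cast
  rfl

theorem integral_rpow_mul_cexp_neg_mul_Ioi {s : ℝ} (hs : 0 < s) {z : ℂ} (hz : 0 < z.re) :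
    ∫ t in Set.Ioi (0 : ℝ), (t : ℂ) ^ (s - 1 : ℂ) * cexp (-(z * t)) =
      Gamma s * z ^ (-s : ℂ) := by
  have key := integral_mul_cexp_eq_of_eq_ofReal (w := fun t ↦ t ^ (s - 1)) (by fun_prop)
    (fun t ht ↦ Real.rpow_nonneg ht.le _) (H := fun z ↦ Gamma s * z ^ (-s : ℂ))
    (fun z hz ↦ ((differentiableAt_id.cpow_const (Or.inl hz)).const_mul
      _).differentiableWithinAt) (fun r hr ↦ ?_) (fun r hr ↦ ?_) hz
  · rw [← key]
    refine setIntegral_congr_fun measurableSet_Ioi fun t (ht : 0 < t) ↦ ?_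
    simp [ofReal_cpow ht.le]
  · simpa using integrableOn_rpow_mul_exp_neg_mul_rpow (s := s - 1) (by linarith) one_pos hr
  · rw [Real.integral_rpow_mul_exp_neg_mul_Ioi hs hr, one_div, Real.inv_rpow hr.le,
      ← Real.rpow_neg hr.le, Complex.Gamma_ofReal]
    push_cast [ofReal_cpow hr.le]
    ring

/-! ### Poisson summation on the half-line -/

/-- The absolute convergence needed by `sumSubIntegral`. -/
structure SumIntegrable (f : ℝ → ℂ) : Prop where
  summable : Summable fun n : ℕ ↦ f (n + 1)
  integrableOn : IntegrableOn f (Set.Ioi 0)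

/-- The Euler–Maclaurin defect `∑_{n ≥ 1} f n - ∫₀^∞ f`. -/
noncomputable def sumSubIntegral (f : ℝ → ℂ) : ℂ :=
  ∑' n : ℕ, f (n + 1) - ∫ t in Set.Ioi 0, f t

theorem SumIntegrable.add {f g : ℝ → ℂ} (hf : SumIntegrable f) (hg : SumIntegrable g) :
    SumIntegrable fun t ↦ f t + g t :=
  ⟨hf.summable.add hg.summable, Integrable.add hf.integrableOn hg.integrableOn⟩

theorem SumIntegrable.const_mul {f : ℝ → ℂ} (hf : SumIntegrable f) (c : ℂ) :
    SumIntegrable fun t ↦ c * f t :=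
  ⟨hf.summable.mul_left c, Integrable.const_mul hf.integrableOn c⟩

theorem sumSubIntegral_congr {f g : ℝ → ℂ} (hfg : Set.EqOn f g (Set.Ioi 0)) :
    sumSubIntegral f = sumSubIntegral g := by
  rw [sumSubIntegral, sumSubIntegral, setIntegral_congr_fun measurableSet_Ioi hfg]
  congr 1
  exact tsum_congr fun n ↦ hfg (Set.mem_Ioi.2 (by positivity))

theorem sumSubIntegral_add {f g : ℝ → ℂ} (hf : SumIntegrable f) (hg : SumIntegrable g) :
    sumSubIntegral (fun t ↦ f t + g t) = sumSubIntegral f + sumSubIntegral g := by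
  rw [sumSubIntegral, hf.summable.tsum_add hg.summable,
    integral_add hf.integrableOn hg.integrableOn, sumSubIntegral, sumSubIntegral]
  ring

theorem sumSubIntegral_const_mul (f : ℝ → ℂ) (c : ℂ) :
    sumSubIntegral (fun t ↦ c * f t) = c * sumSubIntegral f := by
  rw [sumSubIntegral, tsum_mul_left, integral_const_mul, sumSubIntegral, mul_sub]

theorem sumSubIntegral_tsum {F : ℕ → ℝ → ℂ} {b : ℕ → ℝ} {g : ℝ → ℂ} (hg : SumIntegrable g)
    (hF : ∀ d, AEStronglyMeasurable (F d) (volume.restrict (Set.Ioi 0))) (hb : Summable b)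
    (hbound : ∀ d, ∀ t > 0, ‖F d t‖ ≤ b d * ‖g t‖) :
    sumSubIntegral (fun t ↦ ∑' d, F d t) = ∑' d, sumSubIntegral (F d) := by
  have hint (d : ℕ) : IntegrableOn (F d) (Set.Ioi 0) :=
    (hg.integrableOn.norm.const_mul (b d)).mono' (hF d)
      ((ae_restrict_iff' measurableSet_Ioi).2 (.of_forall (hbound d)))
  have hint_norm : Summable fun d ↦ ∫ t in Set.Ioi 0, ‖F d t‖ := by
    refine (hb.mul_right (∫ t in Set.Ioi 0, ‖g t‖)).of_nonneg_of_le
      (fun d ↦ integral_nonneg fun t ↦ norm_nonneg _) fun d ↦ ?_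
    rw [← integral_const_mul]
    exact setIntegral_mono_on (hint d).norm (hg.integrableOn.norm.const_mul _) measurableSet_Ioi
      (hbound d)
  have hsum : Summable fun q : ℕ × ℕ ↦ F q.1 (q.2 + 1) :=
    .of_norm_bounded (summable_mul_of_summable_norm hb.norm hg.summable.norm.norm)
      fun q ↦ hbound q.1 _ (by positivity)
  have hI := hasSum_integral_of_summable_integral_norm hint hint_norm
  rw [sumSubIntegral, ← hI.tsum_eq, Summable.tsum_comm (f := fun d (n : ℕ) ↦ F d (n + 1)) hsum,
    ← hsum.prod.tsum_sub hI.summable]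
  rfl

theorem tendsto_mul_exp_neg_mul (t : ℝ) (c : ℂ) :
    Tendsto (fun u : ℝ ↦ c * cexp (-(u * t))) (𝓝[>] 0) (𝓝 c) := by
  have : Continuous fun u : ℝ ↦ c * cexp (-(u * t)) := by fun_prop
  simpa using (this.tendsto 0).mono_left nhdsWithin_le_nhds

theorem norm_mul_exp_neg_mul_le {u t : ℝ} (hu : 0 ≤ u) (ht : 0 ≤ t) (c : ℂ) :
    ‖c * cexp (-(u * t))‖ ≤ ‖c‖ := by
  rw [norm_mul, norm_exp]
  exact mul_le_of_le_one_right (norm_nonneg _)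
    (Real.exp_le_one_iff.2 (by simpa using mul_nonneg hu ht))

theorem SumIntegrable.mul_exp {f : ℝ → ℂ} (hf : SumIntegrable f) {u : ℝ} (hu : 0 ≤ u) :
    SumIntegrable fun t ↦ f t * cexp (-(u * t)) where
  summable := .of_norm_bounded hf.summable.norm fun n ↦
    norm_mul_exp_neg_mul_le hu (by positivity) _
  integrableOn := hf.integrableOn.norm.mono' (hf.integrableOn.aestronglyMeasurable.mul
    (by fun_prop : Continuous fun t : ℝ ↦ cexp (-(u * t))).aestronglyMeasurable)
    ((ae_restrict_iff' measurableSet_Ioi).2 (.of_forall fun _ (ht : 0 < _) ↦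
      norm_mul_exp_neg_mul_le hu ht.le _))

theorem tendsto_integral_mul_exp {f : ℝ → ℂ} (hf : IntegrableOn f (Set.Ioi 0)) :
    Tendsto (fun u : ℝ ↦ ∫ t in Set.Ioi 0, f t * cexp (-(u * t))) (𝓝[>] 0)
      (𝓝 (∫ t in Set.Ioi 0, f t)) := by
  refine tendsto_integral_filter_of_dominated_convergence (fun t ↦ ‖f t‖) (.of_forall fun u ↦ ?_)
    ?_ hf.norm (.of_forall fun t ↦ tendsto_mul_exp_neg_mul t _)
  · exact hf.aestronglyMeasurable.mul
      (by fun_prop : Continuous fun t : ℝ ↦ cexp (-(u * t))).aestronglyMeasurable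
  · filter_upwards [self_mem_nhdsWithin] with u (hu : 0 < u)
    exact (ae_restrict_iff' measurableSet_Ioi).2 (.of_forall fun t (ht : 0 < t) ↦
      norm_mul_exp_neg_mul_le hu.le ht.le _)

theorem tendsto_sumSubIntegral_mul_exp {f : ℝ → ℂ} (hf : SumIntegrable f) :
    Tendsto (fun u : ℝ ↦ sumSubIntegral fun t ↦ f t * cexp (-(u * t))) (𝓝[>] 0)
      (𝓝 (sumSubIntegral f)) := by
  refine Tendsto.sub (tendsto_tsum_of_dominated_convergence hf.summable.norm
    (fun n ↦ tendsto_mul_exp_neg_mul _ _) ?_) (tendsto_integral_mul_exp hf.integrableOn)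
  filter_upwards [self_mem_nhdsWithin] with u (hu : 0 < u) n
  exact norm_mul_exp_neg_mul_le hu.le (by positivity) _

theorem continuous_indicator_Ici {f : ℝ → ℂ} (hf : ContinuousOn f (Set.Ici 0)) (h0 : f 0 = 0) :
    Continuous ((Set.Ici 0).indicator f) :=
  continuous_indicator (by simp [h0]) (by rwa [closure_Ici])

theorem indicator_mul_exp_isBigO_cocompact {g : ℝ → ℂ} {N : ℝ} (hg : g =O[atTop] (· ^ N))
    {u : ℝ} (hu : 0 < u) :
    (Set.Ici 0).indicator (fun t : ℝ ↦ g t * cexp (-(u * t))) =O[cocompact ℝ]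
      fun t : ℝ ↦ |t| ^ (-2 : ℝ) := by
  rw [cocompact_eq_atBot_atTop]
  refine IsBigO.sup ?_ ?_
  · refine (isBigO_zero _ _).congr' ?_ .rfl
    filter_upwards [eventually_lt_atBot 0] with t ht
    simp [ht]
  · have hexp : (fun t : ℝ ↦ cexp (-(u * t))) =O[atTop] fun t : ℝ ↦ t ^ (-2 - N) :=
      .trans (.of_bound 1 (.of_forall fun t ↦ by simp [norm_exp]))
        (isLittleO_exp_neg_mul_rpow_atTop hu _).isBigO
    refine (hg.mul hexp).congr' ?_ ?_
    · filter_upwards [eventually_ge_atTop 0] with t ht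
      simp [ht]
    · filter_upwards [eventually_gt_atTop 0] with t ht
      rw [abs_of_pos ht, ← Real.rpow_add ht, add_sub_cancel]

theorem fourier_indicator_mul_exp (g : ℝ → ℂ) (u κ : ℝ) :
    FourierTransform.fourier ((Set.Ici 0).indicator fun t : ℝ ↦ g t * cexp (-(u * t))) κ =
      ∫ t in Set.Ioi 0, g t * cexp (-((u + I * (2 * π * κ : ℝ)) * t)) := by
  rw [Real.fourier_real_eq_integral_exp_smul, ← integral_Ici_eq_integral_Ioi,
    ← integral_indicator measurableSet_Ici]
  congr 1 with t
  by_cases ht : t ∈ Set.Ici (0 : ℝ)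
  · rw [Set.indicator_of_mem ht, Set.indicator_of_mem ht, smul_eq_mul, mul_left_comm, ← exp_add]
    congr 2
    push_cast
    ring
  · simp [ht]

theorem tsum_int_eq_tsum_nat_add_one {f : ℤ → ℂ} (hf : ∀ k ≤ 0, f k = 0) :
    ∑' k : ℤ, f k = ∑' n : ℕ, f (n + 1) := by
  have hinj : Function.Injective fun n : ℕ ↦ (n : ℤ) + 1 := fun a b h ↦ by simpa using h
  refine (hinj.tsum_eq fun k hk ↦ ⟨(k - 1).toNat, ?_⟩).symm
  have : 0 < k := not_le.1 fun h ↦ hk (hf k h)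
  simp
  omega

theorem sumSubIntegral_mul_exp_eq_tsum_laplace {g : ℝ → ℂ} (hg : ContinuousOn g (Set.Ici 0))
    (hg0 : g 0 = 0) {N : ℝ} (hgN : g =O[atTop] (· ^ N)) {H : ℂ → ℂ}
    (hH : ∀ z : ℂ, 0 < z.re → ∫ t in Set.Ioi (0 : ℝ), g t * cexp (-(z * t)) = H z)
    {u : ℝ} (hu : 0 < u) (hpos : Summable fun k : ℕ ↦ H (u + I * (2 * π * (k + 1) : ℝ)))
    (hneg : Summable fun k : ℕ ↦ H (u - I * (2 * π * (k + 1) : ℝ))) :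
    sumSubIntegral (fun t ↦ g t * cexp (-(u * t))) =
      ∑' k : ℕ, (H (u + I * (2 * π * (k + 1) : ℝ)) + H (u - I * (2 * π * (k + 1) : ℝ))) := by
  set f : ℝ → ℂ := (Set.Ici 0).indicator fun t ↦ g t * cexp (-(u * t)) with hf
  have hfourier (κ : ℝ) : FourierTransform.fourier f κ = H (u + I * (2 * π * κ : ℝ)) := by
    rw [hf, fourier_indicator_mul_exp, hH _ (by simp [hu])]
  have hfc : Continuous f := continuous_indicator_Ici
    (hg.mul (by fun_prop : Continuous fun t : ℝ ↦ cexp (-(u * t))).continuousOn) (by simp [hg0])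
  have hZ : HasSum (fun k : ℤ ↦ FourierTransform.fourier f (k : ℝ))
      (∑' k : ℕ, H (u + I * (2 * π * (k + 1) : ℝ)) + H u +
        ∑' k : ℕ, H (u - I * (2 * π * (k + 1) : ℝ))) := by
    convert HasSum.of_add_one_of_neg_add_one (f := fun k : ℤ ↦ FourierTransform.fourier f (k : ℝ))
      (by simpa [hfourier] using hpos.hasSum) ?_ using 2
    · simp [hfourier]
    · convert hneg.hasSum using 2 with k
      rw [hfourier]
      push_cast
      ring_nf
  have hpoisson := Real.tsum_eq_tsum_fourier_of_rpow_decay_of_summable hfc one_lt_two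
    (indicator_mul_exp_isBigO_cocompact hgN hu) hZ.summable 0
  have hleft : ∑' n : ℤ, f n = ∑' n : ℕ, g (n + 1) * cexp (-(u * (n + 1))) := by
    rw [tsum_int_eq_tsum_nat_add_one fun k hk ↦ ?_]
    · refine tsum_congr fun n ↦ ?_
      rw [hf, Set.indicator_of_mem (Set.mem_Ici.2 (by positivity))]
      push_cast
      rfl
    · obtain rfl | hk := hk.eq_or_lt
      · simp [hf, hg0]
      · simp [hf, hk]
  simp only [zero_add, hleft, QuotientAddGroup.mk_zero, fourier_eval_zero, mul_one, hZ.tsum_eq]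
    at hpoisson
  rw [sumSubIntegral, hH u (by simpa using hu), hpos.tsum_add hneg]
  push_cast at hpoisson ⊢
  rw [hpoisson]
  ring

/-! ### Poisson summation for powers -/

theorem ofReal_mul_cpow_of_pos {a : ℝ} (ha : 0 < a) (z s : ℂ) : (a * z) ^ s = a ^ s * z ^ s := by
  obtain rfl | hz := eq_or_ne z 0
  · obtain rfl | hs := eq_or_ne s 0 <;> simp [*]
  have ha' : (a : ℂ) ≠ 0 := ofReal_ne_zero.2 ha.ne'
  rw [cpow_def_of_ne_zero (mul_ne_zero ha' hz), cpow_def_of_ne_zero ha', cpow_def_of_ne_zero hz,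
    log_ofReal_mul ha hz, ofReal_log ha.le, add_mul, exp_add]

theorem I_mul_ofReal_cpow {y : ℝ} (hy : 0 < y) (s : ℂ) :
    (I * y) ^ s = y ^ s * cexp (π * s / 2 * I) := by
  rw [mul_comm, ofReal_mul_cpow_of_pos hy, cpow_def_of_ne_zero I_ne_zero, log_I]
  ring_nf

theorem neg_I_mul_ofReal_cpow {y : ℝ} (hy : 0 < y) (s : ℂ) :
    (-(I * y)) ^ s = y ^ s * cexp (-(π * s / 2) * I) := by
  rw [← neg_mul, mul_comm, ofReal_mul_cpow_of_pos hy,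
    cpow_def_of_ne_zero (neg_ne_zero.2 I_ne_zero), log_neg_I]
  ring_nf

theorem norm_cpow_le_of_re_nonneg {z : ℂ} (hz : 0 ≤ z.re) (hz0 : z ≠ 0) (s : ℂ) :
    ‖z ^ s‖ ≤ ‖z‖ ^ s.re * Real.exp (π / 2 * |s.im|) := by
  rw [norm_cpow_of_ne_zero hz0, div_eq_mul_inv, ← Real.exp_neg]
  gcongr
  calc -(z.arg * s.im) ≤ |z.arg| * |s.im| := by rw [← abs_mul]; exact neg_le_abs _
    _ ≤ π / 2 * |s.im| := by gcongr; exact abs_arg_le_pi_div_two_iff.2 hz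

/-- The conjugate pair `(x + iy)⁻ˢ + (x - iy)⁻ˢ` minus its value at `x = 0`, for `y > 0`. -/
noncomputable def pairedPow (s : ℂ) (x y : ℝ) : ℂ :=
  (x + I * y) ^ (-s) + (x - I * y) ^ (-s) - 2 * cos (π * s / 2) * y ^ (-s)

theorem pairedPow_zero_left (s : ℂ) {y : ℝ} (hy : 0 < y) : pairedPow s 0 y = 0 := by
  rw [pairedPow, ofReal_zero, zero_add, zero_sub, I_mul_ofReal_cpow hy, neg_I_mul_ofReal_cpow hy,
    Complex.cos]
  ring_nf

theorem pairedPow_mul (s : ℂ) {a y : ℝ} (ha : 0 < a) (x : ℝ) (hy : 0 ≤ y) :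
    pairedPow s (a * x) (a * y) = a ^ (-s) * pairedPow s x y := by
  have hadd : ((a * x : ℝ) : ℂ) + I * (a * y : ℝ) = a * (x + I * y) := by push_cast; ring
  have hsub : ((a * x : ℝ) : ℂ) - I * (a * y : ℝ) = a * (x - I * y) := by push_cast; ring
  rw [pairedPow, hadd, hsub, ofReal_mul_cpow_of_pos ha, ofReal_mul_cpow_of_pos ha, ofReal_mul,
    mul_cpow_ofReal_nonneg ha.le hy, pairedPow]
  ring

theorem norm_add_I_mul_cpow_neg_sub_le {s : ℂ} (hs : -1 ≤ s.re) {x x' y : ℝ} (hx : 0 ≤ x)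
    (hx' : 0 ≤ x') (hy : y ≠ 0) :
    ‖(x + I * y : ℂ) ^ (-s) - (x' + I * y : ℂ) ^ (-s)‖ ≤
      ‖s‖ * Real.exp (π / 2 * |s.im|) * |y| ^ (-s.re - 1) * |x - x'| := by
  have hne (x : ℝ) : (x + I * y : ℂ) ≠ 0 := fun h ↦ hy (by simpa using congrArg im h)
  have hderiv : ∀ x ∈ Set.Ici (0 : ℝ), HasDerivWithinAt (fun x : ℝ ↦ (x + I * y : ℂ) ^ (-s))
      (-s * (x + I * y : ℂ) ^ (-s - 1)) (Set.Ici 0) x := fun x _ ↦ by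
    have hslit : (x + I * y : ℂ) ∈ slitPlane := Or.inr (by simpa using hy)
    have h := ((hasDerivAt_id (x : ℂ)).add_const (I * y)).cpow_const (c := -s) hslit
    simpa using! h.comp_ofReal.hasDerivWithinAt
  refine (convex_Ici (0 : ℝ)).norm_image_sub_le_of_norm_hasDerivWithin_le hderiv (fun x hx ↦ ?_)
    hx' hx
  rw [norm_mul, norm_neg, mul_assoc, mul_comm (Real.exp _)]
  gcongr
  refine (norm_cpow_le_of_re_nonneg (by simpa using hx) (hne x) _).trans ?_
  simp only [sub_re, neg_re, one_re, sub_im, neg_im, one_im, sub_zero, abs_neg]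
  refine mul_le_mul_of_nonneg_right (Real.rpow_le_rpow_of_nonpos (abs_pos.2 hy) ?_ (by linarith))
    (by positivity)
  simpa using abs_im_le_norm (x + I * y : ℂ)

theorem norm_pairedPow_sub_le {s : ℂ} (hs : -1 ≤ s.re) {x x' y : ℝ} (hx : 0 ≤ x) (hx' : 0 ≤ x')
    (hy : 0 < y) :
    ‖pairedPow s x y - pairedPow s x' y‖ ≤
      2 * (‖s‖ * Real.exp (π / 2 * |s.im|)) * y ^ (-s.re - 1) * |x - x'| := by
  have hadd := norm_add_I_mul_cpow_neg_sub_le hs hx hx' hy.ne'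
  have hsub := norm_add_I_mul_cpow_neg_sub_le hs hx hx' (neg_ne_zero.2 hy.ne')
  simp only [ofReal_neg, mul_neg, ← sub_eq_add_neg, abs_neg, abs_of_pos hy] at hadd hsub
  calc ‖pairedPow s x y - pairedPow s x' y‖
      = ‖((x + I * y : ℂ) ^ (-s) - (x' + I * y : ℂ) ^ (-s)) +
          ((x - I * y : ℂ) ^ (-s) - (x' - I * y : ℂ) ^ (-s))‖ := by
        rw [pairedPow, pairedPow]
        ring_nf
    _ ≤ _ := (norm_add_le_of_le hadd hsub).trans_eq (by ring)

theorem summable_nat_add_one_rpow {p : ℝ} (hp : p < -1) :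
    Summable fun k : ℕ ↦ ((k : ℝ) + 1) ^ p := by
  simpa using (summable_nat_add_iff 1).2 (Real.summable_nat_rpow.2 hp)

theorem nat_add_one_le_two_pi_mul (k : ℕ) : (k : ℝ) + 1 ≤ 2 * π * (k + 1) :=
  le_mul_of_one_le_left (by positivity) (by linarith [Real.pi_gt_three])

/-- The Poisson dual series `∑_{k ≥ 1} pairedPow s u (2πk)`. -/
noncomputable def pairedPowSeries (s : ℂ) (u : ℝ) : ℂ :=
  ∑' k : ℕ, pairedPow s u (2 * π * (k + 1))

theorem norm_pairedPow_two_pi_sub_le {s : ℂ} {δ : ℝ} (hδ : 0 ≤ δ) (hs : δ ≤ s.re) {u u' : ℝ}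
    (hu : 0 ≤ u) (hu' : 0 ≤ u') (k : ℕ) :
    ‖pairedPow s u (2 * π * (k + 1)) - pairedPow s u' (2 * π * (k + 1))‖ ≤
      2 * (‖s‖ * Real.exp (π / 2 * |s.im|)) * ((k : ℝ) + 1) ^ (-δ - 1) * |u - u'| := by
  refine (norm_pairedPow_sub_le (by linarith) hu hu' (by positivity)).trans ?_
  gcongr
  calc (2 * π * (k + 1)) ^ (-s.re - 1) ≤ ((k : ℝ) + 1) ^ (-s.re - 1) :=
        Real.rpow_le_rpow_of_nonpos (by positivity) (nat_add_one_le_two_pi_mul k) (by linarith)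
    _ ≤ ((k : ℝ) + 1) ^ (-δ - 1) := by
        gcongr
        simp

theorem norm_pairedPow_two_pi_le {s : ℂ} {δ : ℝ} (hδ : 0 ≤ δ) (hs : δ ≤ s.re) {u : ℝ}
    (hu : 0 ≤ u) (k : ℕ) :
    ‖pairedPow s u (2 * π * (k + 1))‖ ≤
      2 * (‖s‖ * Real.exp (π / 2 * |s.im|)) * ((k : ℝ) + 1) ^ (-δ - 1) * u := by
  have h := norm_pairedPow_two_pi_sub_le hδ hs hu le_rfl k
  rwa [pairedPow_zero_left s (by positivity), sub_zero, sub_zero, abs_of_nonneg hu] at h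

theorem summable_pairedPow {s : ℂ} (hs : 0 < s.re) {u : ℝ} (hu : 0 ≤ u) :
    Summable fun k : ℕ ↦ pairedPow s u (2 * π * (k + 1)) :=
  .of_norm_bounded (((summable_nat_add_one_rpow (by linarith)).mul_left _).mul_right u)
    (norm_pairedPow_two_pi_le hs.le le_rfl hu)

theorem pairedPowSeries_zero (s : ℂ) : pairedPowSeries s 0 = 0 :=
  (tsum_congr fun k ↦ pairedPow_zero_left s (by positivity)).trans tsum_zero

theorem exists_norm_pairedPowSeries_sub_le {s : ℂ} (hs : 0 < s.re) :
    ∃ K, ∀ u ≥ 0, ∀ u' ≥ 0, ‖pairedPowSeries s u - pairedPowSeries s u'‖ ≤ K * |u - u'| := by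
  obtain ⟨K, hK⟩ := (summable_nat_add_one_rpow (p := -s.re - 1) (by linarith)).mul_left
    (2 * (‖s‖ * Real.exp (π / 2 * |s.im|)))
  refine ⟨K, fun u hu u' hu' ↦ ?_⟩
  rw [pairedPowSeries, pairedPowSeries,
    ← (summable_pairedPow hs hu).tsum_sub (summable_pairedPow hs hu')]
  exact tsum_of_norm_bounded (hK.mul_right _)
    (norm_pairedPow_two_pi_sub_le hs.le le_rfl hu hu')

theorem tendsto_pairedPowSeries_add {s : ℂ} (hs : 0 < s.re) {x : ℝ} (hx : 0 ≤ x) :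
    Tendsto (fun u ↦ pairedPowSeries s (u + x)) (𝓝[>] 0) (𝓝 (pairedPowSeries s x)) := by
  obtain ⟨K, hK⟩ := exists_norm_pairedPowSeries_sub_le hs
  have hlim : Tendsto (fun u : ℝ ↦ K * |u|) (𝓝[>] 0) (𝓝 0) := by
    have : Continuous fun u : ℝ ↦ K * |u| := by fun_prop
    simpa using (this.tendsto 0).mono_left nhdsWithin_le_nhds
  refine tendsto_iff_norm_sub_tendsto_zero.2
    (squeeze_zero' (.of_forall fun u ↦ norm_nonneg _) ?_ hlim)
  filter_upwards [self_mem_nhdsWithin] with u (hu : 0 < u)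
  simpa using hK (u + x) (by positivity) x hx

theorem differentiableOn_re_pos_tsum {F : ℕ → ℂ → ℂ}
    (hF : ∀ k, DifferentiableOn ℂ (F k) {s | 0 < s.re})
    (hb : ∀ δ > 0, ∀ R, ∃ b : ℕ → ℝ, Summable b ∧
      ∀ k s, δ < s.re → ‖s‖ < R → ‖F k s‖ ≤ b k) :
    DifferentiableOn ℂ (fun s ↦ ∑' k, F k s) {s | 0 < s.re} := by
  intro s (hs : 0 < s.re)
  obtain ⟨b, hb, hle⟩ := hb (s.re / 2) (half_pos hs) (‖s‖ + 1)
  have hU : IsOpen ({z : ℂ | s.re / 2 < z.re} ∩ {z | ‖z‖ < ‖s‖ + 1}) :=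
    (isOpen_lt continuous_const continuous_re).inter (isOpen_lt continuous_norm continuous_const)
  refine DifferentiableAt.differentiableWithinAt
    ((differentiableOn_tsum_of_summable_norm hb (fun k ↦ (hF k).mono ?_) hU
      fun k z hz ↦ hle k z hz.1 hz.2).differentiableAt (hU.mem_nhds ⟨?_, ?_⟩))
  · exact fun z hz ↦ (half_pos hs).trans hz.1
  · exact half_lt_self hs
  · exact lt_add_one ‖s‖

theorem differentiableOn_Gamma_re_pos : DifferentiableOn ℂ Gamma {s | 0 < s.re} := fun s hs ↦
  (differentiableAt_Gamma s fun m h ↦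
    (show 0 < s.re from hs).not_ge (by simp [h])).differentiableWithinAt

theorem differentiable_pairedPow {x y : ℝ} (hy : 0 < y) :
    Differentiable ℂ fun s ↦ pairedPow s x y := by
  have hadd : (x + I * y : ℂ) ≠ 0 := fun h ↦ hy.ne' (by simpa using congrArg im h)
  have hsub : (x - I * y : ℂ) ≠ 0 := fun h ↦ hy.ne' (by simpa using congrArg im h)
  have hy' : (y : ℂ) ≠ 0 := ofReal_ne_zero.2 hy.ne'
  unfold pairedPow
  fun_prop (disch := simp [hadd, hsub, hy'])

theorem differentiableOn_pairedPowSeries {u : ℝ} (hu : 0 ≤ u) :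
    DifferentiableOn ℂ (pairedPowSeries · u) {s | 0 < s.re} := by
  refine differentiableOn_re_pos_tsum
    (fun k ↦ (differentiable_pairedPow (by positivity)).differentiableOn) fun δ hδ R ↦ ⟨_,
      ((summable_nat_add_one_rpow (p := -δ - 1) (by linarith)).mul_left
        (2 * (R * Real.exp (π / 2 * R)))).mul_right u, fun k s hs hR ↦ ?_⟩
  refine (norm_pairedPow_two_pi_le hδ.le hs.le hu k).trans ?_
  have him : |s.im| ≤ R := (abs_im_le_norm s).trans hR.le
  have hR0 : 0 ≤ R := (norm_nonneg s).trans hR.le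
  gcongr

theorem differentiableOn_riemannZeta_sub {c : ℂ} (hc : c.re ≤ 1) :
    DifferentiableOn ℂ (fun s ↦ riemannZeta (c - s)) {s | 0 < s.re} := fun s (hs : 0 < s.re) ↦ by
  have hne : c - s ≠ 1 := fun h ↦ by
    have hre := congrArg re h
    rw [sub_re, one_re] at hre
    linarith
  exact ((differentiableAt_riemannZeta hne).comp s (by fun_prop)).differentiableWithinAt

theorem summable_nat_add_one_rpow_mul_exp (p : ℝ) {u : ℝ} (hu : 0 < u) :
    Summable fun n : ℕ ↦ ((n : ℝ) + 1) ^ p * Real.exp (-(u * (n + 1))) := by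
  have hO : (fun t : ℝ ↦ t ^ p * Real.exp (-(u * t))) =O[atTop] fun t ↦ t ^ (-2 : ℝ) := by
    refine ((isBigO_refl (· ^ p) _).mul
      (isLittleO_exp_neg_mul_rpow_atTop hu (-2 - p)).isBigO).congr' (by simp) ?_
    filter_upwards [eventually_gt_atTop 0] with t ht
    rw [← Real.rpow_add ht, add_sub_cancel]
  have h := summable_of_isBigO_nat (Real.summable_nat_rpow.2 (by norm_num))
    (hO.comp_tendsto tendsto_natCast_atTop_atTop)
  simpa using (summable_nat_add_iff 1).2 h

theorem norm_cpow_mul_cexp_neg_mul (s : ℂ) (u : ℝ) {t : ℝ} (ht : 0 < t) :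
    ‖(t : ℂ) ^ s * cexp (-(u * t))‖ = t ^ s.re * Real.exp (-(u * t)) := by
  rw [norm_mul, norm_cpow_eq_rpow_re_of_pos ht, norm_exp]
  simp

theorem sumIntegrable_cpow_mul_exp {s : ℂ} (hs : 0 < s.re) {u : ℝ} (hu : 0 < u) :
    SumIntegrable fun t ↦ (t : ℂ) ^ (s - 1) * cexp (-(u * t)) where
  summable := by
    refine .of_norm_bounded (summable_nat_add_one_rpow_mul_exp (s.re - 1) hu) fun n ↦ ?_
    rw [norm_cpow_mul_cexp_neg_mul _ _ (by positivity), sub_re, one_re]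
  integrableOn := by
    have h := integrableOn_rpow_mul_exp_neg_mul_rpow (s := s.re - 1) (by linarith) one_pos hu
    refine h.mono' ?_ ((ae_restrict_iff' measurableSet_Ioi).2 (.of_forall fun t ht ↦ ?_))
    · exact (by fun_prop : Measurable fun t : ℝ ↦
        (t : ℂ) ^ (s - 1) * cexp (-(u * t))).aestronglyMeasurable
    · rw [norm_cpow_mul_cexp_neg_mul _ _ ht, Real.rpow_one, sub_re, one_re, neg_mul]

theorem sumSubIntegral_cpow_mul_exp {s : ℂ} (hs : 0 < s.re) {u : ℝ} (hu : 0 < u) :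
    sumSubIntegral (fun t ↦ (t : ℂ) ^ (s - 1) * cexp (-(u * t))) =
      ∑' n : ℕ, (n + 1 : ℂ) ^ (s - 1) * cexp (-(u * (n + 1))) - (1 / u : ℂ) ^ s * Gamma s := by
  rw [sumSubIntegral, integral_cpow_mul_exp_neg_mul_Ioi hs (by simpa)]
  push_cast
  rfl

theorem differentiableOn_sumSubIntegral_cpow_mul_exp {u : ℝ} (hu : 0 < u) :
    DifferentiableOn ℂ (fun s : ℂ ↦ sumSubIntegral fun t ↦ (t : ℂ) ^ (s - 1) * cexp (-(u * t)))
      {s | 0 < s.re} := by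
  refine DifferentiableOn.congr (.sub (differentiableOn_re_pos_tsum (fun n ↦ ?_)
    fun _ _ R ↦ ⟨_, summable_nat_add_one_rpow_mul_exp R hu, fun n s _ hR ↦ ?_⟩) fun s hs ↦ ?_)
    fun s hs ↦ sumSubIntegral_cpow_mul_exp hs hu
  · have : (n + 1 : ℂ) ≠ 0 := n.cast_add_one_ne_zero
    fun_prop (disch := simp [this])
  · have h := norm_cpow_mul_cexp_neg_mul (s - 1) u (t := n + 1) (by positivity)
    push_cast at h
    rw [h]
    gcongr
    · simp
    · linarith [re_le_norm s, sub_re s 1, one_re]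
  · have hu' : (1 / u : ℂ) ≠ 0 := one_div_ne_zero (ofReal_ne_zero.2 hu.ne')
    exact (differentiableAt_id.const_cpow (Or.inl hu')).differentiableWithinAt.mul
      (differentiableOn_Gamma_re_pos s hs)

theorem Gamma_mul_tsum_two_mul_cos_mul_cpow_neg {s : ℂ} (hs : 1 < s.re) :
    Gamma s * ∑' k : ℕ, 2 * cos (π * s / 2) * ((2 * π * (k + 1) : ℝ) : ℂ) ^ (-s) =
      riemannZeta (1 - s) := by
  have hterm (k : ℕ) : ((2 * π * (k + 1) : ℝ) : ℂ) ^ (-s) =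
      (2 * π) ^ (-s) * (1 / (k + 1 : ℂ) ^ s) := by
    rw [ofReal_mul, mul_cpow_ofReal_nonneg (by positivity) (by positivity), one_div, ← cpow_neg]
    push_cast
    rfl
  rw [riemannZeta_one_sub (fun n h ↦ ?_) (fun h ↦ ?_), zeta_eq_tsum_one_div_nat_add_one_cpow hs,
    tsum_mul_left]
  · simp_rw [hterm, tsum_mul_left]
    ring
  · norm_num [h] at hs
    linarith [(n.cast_nonneg : (0 : ℝ) ≤ n)]
  · norm_num [h] at hs

theorem summable_add_I_mul_cpow_neg {s : ℝ} (hs : 1 < s) (u : ℝ) {y : ℕ → ℝ}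
    (hy : ∀ k : ℕ, (k : ℝ) + 1 ≤ |y k|) : Summable fun k ↦ (u + I * y k : ℂ) ^ (-s : ℂ) := by
  refine .of_norm_bounded (summable_nat_add_one_rpow (p := -s) (by linarith)) fun k ↦ ?_
  have hle : (k : ℝ) + 1 ≤ ‖(u + I * y k : ℂ)‖ :=
    (hy k).trans (by simpa using abs_im_le_norm (u + I * y k : ℂ))
  rw [← ofReal_neg, norm_cpow_real]
  exact Real.rpow_le_rpow_of_nonpos (by positivity) hle (by linarith)

theorem sumSubIntegral_cpow_mul_exp_eq_of_one_lt {s : ℝ} (hs : 1 < s) {u : ℝ} (hu : 0 < u) :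
    sumSubIntegral (fun t ↦ (t : ℂ) ^ (s - 1 : ℂ) * cexp (-(u * t))) =
      riemannZeta (1 - s) + Gamma s * pairedPowSeries s u := by
  have hle (k : ℕ) : (k : ℝ) + 1 ≤ |2 * π * (k + 1)| :=
    (nat_add_one_le_two_pi_mul k).trans (le_abs_self _)
  have hpos := summable_add_I_mul_cpow_neg hs u hle
  have hneg := summable_add_I_mul_cpow_neg hs u (y := fun k ↦ -(2 * π * (k + 1)))
    (by simpa using hle)
  simp only [ofReal_neg, mul_neg, ← sub_eq_add_neg] at hneg
  have hs' : 0 < (s : ℂ).re := by rw [ofReal_re]; linarith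
  have hcont : Continuous fun t : ℝ ↦ (t : ℂ) ^ (s - 1 : ℂ) := by
    refine continuous_ofReal_cpow_const ?_
    simpa using hs
  have hO : (fun t : ℝ ↦ (t : ℂ) ^ (s - 1 : ℂ)) =O[atTop] (· ^ (s - 1)) := by
    refine .of_norm_eventuallyLE ?_
    filter_upwards [eventually_gt_atTop 0] with t ht
    simp [norm_cpow_eq_rpow_re_of_pos ht]
  rw [sumSubIntegral_mul_exp_eq_tsum_laplace hcont.continuousOn ?_ hO
    (fun z hz ↦ integral_rpow_mul_cexp_neg_mul_Ioi (by linarith) hz) hu (hpos.mul_left _)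
    (hneg.mul_left _), ← Gamma_mul_tsum_two_mul_cos_mul_cpow_neg (by simpa), pairedPowSeries,
    ← mul_add, ← Summable.tsum_add ?_ (summable_pairedPow hs' hu.le), ← tsum_mul_left]
  · simp only [pairedPow, add_sub_cancel, mul_add]
  · refine ((hpos.add hneg).sub (summable_pairedPow hs' hu.le)).congr fun k ↦ ?_
    rw [pairedPow, sub_sub_cancel]
  · rw [ofReal_zero, zero_cpow (sub_ne_zero.2 (by exact_mod_cast hs.ne'))]

-- For `re s > 1` the zeta value is the sum of the `k`-dependent constants subtracted in
-- `pairedPow`; that subtraction is what makes the series converge for `re s > 0`.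
theorem sumSubIntegral_cpow_mul_exp_eq {s : ℂ} (hs : 0 < s.re) {u : ℝ} (hu : 0 < u) :
    sumSubIntegral (fun t ↦ (t : ℂ) ^ (s - 1) * cexp (-(u * t))) =
      riemannZeta (1 - s) + Gamma s * pairedPowSeries s u :=
  eqOn_re_pos_of_eq_ofReal (differentiableOn_sumSubIntegral_cpow_mul_exp hu)
    ((differentiableOn_riemannZeta_sub one_re.le).add
      (differentiableOn_Gamma_re_pos.mul (differentiableOn_pairedPowSeries hu.le)))
    (fun _ hr ↦ sumSubIntegral_cpow_mul_exp_eq_of_one_lt hr hu) hs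

theorem tendsto_sumSubIntegral_cpow_mul_exp {s : ℂ} (hs : 0 < s.re) :
    Tendsto (fun u : ℝ ↦ sumSubIntegral fun t ↦ (t : ℂ) ^ (s - 1) * cexp (-(u * t))) (𝓝[>] 0)
      (𝓝 (riemannZeta (1 - s))) := by
  have hlim := ((tendsto_pairedPowSeries_add hs le_rfl).const_mul (Gamma s)).const_add
    (riemannZeta (1 - s))
  simp only [add_zero, pairedPowSeries_zero, mul_zero] at hlim
  refine hlim.congr' ?_
  filter_upwards [self_mem_nhdsWithin] with u hu using (sumSubIntegral_cpow_mul_exp_eq hs hu).symm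

/-! ### The Cauchy–Schlömilch substitution -/

section CauchySchlomilch

variable {α β : ℝ}

theorem strictMonoOn_mul_sub_div (hα : 0 < α) (hβ : 0 < β) :
    StrictMonoOn (fun u : ℝ ↦ α * u - β / u) (Set.Ioi 0) := fun _ hu _ _ huv ↦
  sub_lt_sub (mul_lt_mul_of_pos_left huv hα) (div_lt_div_of_pos_left hβ hu huv)

theorem image_mul_sub_div_Ioi (hα : 0 < α) (hβ : 0 < β) :
    (fun u : ℝ ↦ α * u - β / u) '' Set.Ioi 0 = Set.univ := by
  refine Set.eq_univ_of_forall fun y ↦ ?_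
  set r := √(y ^ 2 + 4 * α * β)
  have hyr : |y| < r := by
    rw [← Real.sqrt_sq_eq_abs]
    exact Real.sqrt_lt_sqrt (by positivity) (lt_add_of_pos_right _ (by positivity))
  have hpos : 0 < y + r := by linarith [neg_abs_le y]
  have hr2 : r ^ 2 = y ^ 2 + 4 * α * β := Real.sq_sqrt (by positivity)
  refine ⟨(y + r) / (2 * α), Set.mem_Ioi.2 (by positivity), ?_⟩
  field_simp
  linarith

theorem hasDerivAt_mul_sub_div (α β : ℝ) {u : ℝ} (hu : u ≠ 0) :
    HasDerivAt (fun u : ℝ ↦ α * u - β / u) (α + β / u ^ 2) u := by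
  have h := ((hasDerivAt_id u).const_mul α).sub ((hasDerivAt_inv hu).const_mul β)
  exact h.congr_deriv (by ring)

theorem integrableOn_deriv_mul_comp_mul_sub_div (hα : 0 < α) (hβ : 0 < β) {f : ℝ → ℝ}
    (hf : Integrable f) :
    IntegrableOn (fun u ↦ (α + β / u ^ 2) * f (α * u - β / u)) (Set.Ioi 0) := by
  refine IntegrableOn.congr_fun ((integrableOn_image_iff_integrableOn_abs_deriv_smul
    measurableSet_Ioi (fun u hu ↦ (hasDerivAt_mul_sub_div α β
      (ne_of_gt hu)).hasDerivWithinAt) (strictMonoOn_mul_sub_div hα hβ).injOn f).1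
    (by rwa [image_mul_sub_div_Ioi hα hβ, integrableOn_univ])) (fun u _ ↦ ?_) measurableSet_Ioi
  rw [abs_of_pos (by positivity), smul_eq_mul]

theorem integral_deriv_mul_comp_mul_sub_div (hα : 0 < α) (hβ : 0 < β) (f : ℝ → ℝ) :
    ∫ u in Set.Ioi 0, (α + β / u ^ 2) * f (α * u - β / u) = ∫ y, f y := by
  have h := integral_image_eq_integral_abs_deriv_smul measurableSet_Ioi
    (fun u hu ↦ (hasDerivAt_mul_sub_div α β (ne_of_gt hu)).hasDerivWithinAt)
    (strictMonoOn_mul_sub_div hα hβ).injOn f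
  rw [image_mul_sub_div_Ioi hα hβ, setIntegral_univ] at h
  rw [h]
  refine setIntegral_congr_fun measurableSet_Ioi fun u _ ↦ ?_
  rw [abs_of_pos (by positivity), smul_eq_mul]

theorem integrableOn_comp_mul_sub_div (hα : 0 < α) (hβ : 0 < β) {f : ℝ → ℝ}
    (hf : Integrable f) : IntegrableOn (fun u ↦ f (α * u - β / u)) (Set.Ioi 0) := by
  refine ((integrableOn_deriv_mul_comp_mul_sub_div hα hβ hf).bdd_mul (c := α⁻¹)
    (f := fun u ↦ (α + β / u ^ 2)⁻¹)
    (by fun_prop : Measurable fun u : ℝ ↦ (α + β / u ^ 2)⁻¹).aestronglyMeasurable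
    (.of_forall fun u ↦ ?_)).congr (.of_forall fun u ↦ ?_)
  · rw [Real.norm_of_nonneg (by positivity)]
    exact inv_anti₀ hα (le_add_of_nonneg_right (by positivity))
  · exact inv_mul_cancel_left₀ (by positivity) _

-- Substitute `u = β / (α v)`, which negates `α u - β / u`.
theorem integral_div_sq_mul_comp_mul_sub_div (hα : 0 < α) (hβ : 0 < β) {f : ℝ → ℝ}
    (hf : Function.Even f) :
    ∫ u in Set.Ioi 0, β / u ^ 2 * f (α * u - β / u) =
      α * ∫ u in Set.Ioi 0, f (α * u - β / u) := by
  have h := integral_comp_rpow_Ioi (fun v ↦ f (α * (β / α * v) - β / (β / α * v))) (p := -1)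
    (by norm_num)
  rw [integral_comp_mul_left_Ioi (fun v ↦ f (α * v - β / v)) 0 (by positivity : 0 < β / α),
    mul_zero, inv_div, smul_eq_mul] at h
  have hcancel (J : ℝ) : α * J = β * (α / β * J) := by field_simp
  rw [hcancel, ← h, ← integral_const_mul]
  refine setIntegral_congr_fun measurableSet_Ioi fun u (hu : 0 < u) ↦ ?_
  have hneg : α * (β / α * u ^ (-1 : ℝ)) - β / (β / α * u ^ (-1 : ℝ)) = -(α * u - β / u) := by
    rw [Real.rpow_neg_one]
    field_simp
    ring
  rw [hneg, hf, abs_neg, abs_one, one_mul, smul_eq_mul, ← mul_assoc]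
  norm_num [Real.rpow_neg hu.le, div_eq_mul_inv]

theorem integral_comp_mul_sub_div (hα : 0 < α) (hβ : 0 < β) {f : ℝ → ℝ}
    (hf : Integrable f) (hf' : Function.Even f) :
    ∫ u in Set.Ioi 0, f (α * u - β / u) = (∫ y, f y) / (2 * α) := by
  have hint := integrableOn_comp_mul_sub_div hα hβ hf
  have hint' : IntegrableOn (fun u ↦ β / u ^ 2 * f (α * u - β / u)) (Set.Ioi 0) :=
    ((integrableOn_deriv_mul_comp_mul_sub_div hα hβ hf).sub (hint.const_mul α)).congr
      (.of_forall fun u ↦ by simp only [Pi.sub_apply]; ring)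
  rw [← integral_deriv_mul_comp_mul_sub_div hα hβ f, eq_div_iff (by positivity)]
  simp only [add_mul]
  rw [integral_add (hint.const_mul α) hint', integral_const_mul,
    integral_div_sq_mul_comp_mul_sub_div hα hβ hf']
  ring

end CauchySchlomilch

/-! ### Poisson summation for the heat kernel -/

/-- The one-dimensional heat kernel as a function of time, `e^{-a/t} / √t`; it vanishes at `t = 0`
because `√0 = 0`. -/
noncomputable def heatKernel (a t : ℝ) : ℝ := Real.exp (-(a / t)) / √t

/-- The Laplace transform of `heatKernel a`, in closed form. -/
noncomputable def heatLaplace (a : ℝ) (z : ℂ) : ℂ :=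
  √π * z ^ (-1 / 2 : ℂ) * cexp (-(2 * √a * z ^ (1 / 2 : ℂ)))

theorem heatKernel_nonneg (a t : ℝ) : 0 ≤ heatKernel a t := by
  unfold heatKernel
  positivity

theorem heatKernel_zero_right (a : ℝ) : heatKernel a 0 = 0 := by simp [heatKernel]

theorem heatKernel_le_sqrt_div {a t : ℝ} (ha : 0 < a) (ht : 0 ≤ t) : heatKernel a t ≤ √t / a := by
  obtain rfl | ht := ht.eq_or_lt
  · simp [heatKernel_zero_right]
  rw [heatKernel, Real.exp_neg, div_le_div_iff₀ (by positivity) ha, Real.mul_self_sqrt ht.le,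
    inv_mul_le_iff₀ (by positivity)]
  calc a = a / t * t := by field_simp
    _ ≤ Real.exp (a / t) * t := by
      gcongr
      linarith [Real.add_one_le_exp (a / t)]

theorem continuousOn_heatKernel {a : ℝ} (ha : 0 < a) :
    ContinuousOn (heatKernel a) (Set.Ici 0) := by
  intro t (ht : 0 ≤ t)
  obtain rfl | ht := ht.eq_or_lt
  · rw [ContinuousWithinAt, heatKernel_zero_right]
    have hlim : Tendsto (fun t ↦ √t / a) (𝓝[≥] 0) (𝓝 0) := by
      have : Continuous fun t ↦ √t / a := by fun_prop
      simpa using (this.tendsto 0).mono_left nhdsWithin_le_nhds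
    refine squeeze_zero' (.of_forall (heatKernel_nonneg a)) ?_ hlim
    filter_upwards [self_mem_nhdsWithin] with t ht using heatKernel_le_sqrt_div ha ht
  · unfold heatKernel
    have := (Real.sqrt_pos.2 ht).ne'
    exact ContinuousAt.continuousWithinAt (by fun_prop (disch := positivity))

theorem heatKernel_rpow_two_mul_exp {a p u : ℝ} (ha : 0 < a) (hp : 0 < p) (hu : 0 < u) :
    (|(2 : ℝ)| * u ^ ((2 : ℝ) - 1)) •
        (heatKernel a (u ^ (2 : ℝ)) * Real.exp (-(p * u ^ (2 : ℝ)))) =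
      2 * Real.exp (-(2 * √a * √p)) * Real.exp (-1 * (√p * u - √a / u) ^ 2) := by
  have hsq : (√p * u - √a / u) ^ 2 = p * u ^ 2 - 2 * √a * √p + a / u ^ 2 := by
    field_simp
    ring_nf
    rw [Real.sq_sqrt ha.le, Real.sq_sqrt hp.le]
    ring
  norm_num [heatKernel, Real.sqrt_sq hu.le]
  rw [hsq, mul_assoc, mul_assoc, ← Real.exp_add, div_mul_eq_mul_div, mul_div_cancel₀ _ hu.ne',
    ← Real.exp_add]
  ring_nf

theorem integrableOn_heatKernel_mul_exp {a p : ℝ} (ha : 0 < a) (hp : 0 < p) :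
    IntegrableOn (fun t ↦ heatKernel a t * Real.exp (-(p * t))) (Set.Ioi 0) := by
  refine (integrableOn_Ioi_comp_rpow_iff _ two_ne_zero).1 (IntegrableOn.congr_fun
    ((integrableOn_comp_mul_sub_div (Real.sqrt_pos.2 hp) (Real.sqrt_pos.2 ha)
      (integrable_exp_neg_mul_sq one_pos)).const_mul _)
    (fun u hu ↦ (heatKernel_rpow_two_mul_exp ha hp hu).symm) measurableSet_Ioi)

theorem integral_heatKernel_mul_exp {a p : ℝ} (ha : 0 < a) (hp : 0 < p) :
    ∫ t in Set.Ioi 0, heatKernel a t * Real.exp (-(p * t)) =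
      √π / √p * Real.exp (-(2 * √a * √p)) := by
  rw [← integral_comp_rpow_Ioi _ two_ne_zero, setIntegral_congr_fun measurableSet_Ioi
    fun u hu ↦ heatKernel_rpow_two_mul_exp ha hp hu, integral_const_mul,
    integral_comp_mul_sub_div (Real.sqrt_pos.2 hp) (Real.sqrt_pos.2 ha)
      (f := fun y ↦ Real.exp (-1 * y ^ 2)) (integrable_exp_neg_mul_sq one_pos)
      fun y ↦ by simp, integral_gaussian, div_one]
  field_simp

theorem heatLaplace_ofReal (a : ℝ) {p : ℝ} (hp : 0 ≤ p) :
    heatLaplace a p = (√π / √p * Real.exp (-(2 * √a * √p)) : ℝ) := by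
  rw [heatLaplace, Real.sqrt_eq_rpow p, neg_div, cpow_neg]
  push_cast [ofReal_cpow hp]
  ring

theorem differentiableAt_heatLaplace (a : ℝ) {z : ℂ} (hz : z ∈ slitPlane) :
    DifferentiableAt ℂ (heatLaplace a) z := by
  unfold heatLaplace
  fun_prop (disch := assumption)

theorem integral_heatKernel_mul_cexp {a : ℝ} (ha : 0 < a) {z : ℂ} (hz : 0 < z.re) :
    ∫ t in Set.Ioi (0 : ℝ), (heatKernel a t : ℂ) * cexp (-(z * t)) = heatLaplace a z := by
  refine integral_mul_cexp_eq_of_eq_ofReal (by unfold heatKernel; fun_prop)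
    (fun t _ ↦ heatKernel_nonneg a t)
    (fun z hz ↦ (differentiableAt_heatLaplace a (Or.inl hz)).differentiableWithinAt)
    (fun p hp ↦ integrableOn_heatKernel_mul_exp ha hp) (fun p hp ↦ ?_) hz
  rw [integral_heatKernel_mul_exp ha hp, heatLaplace_ofReal a hp.le]

theorem sqrt_norm_div_two_le_re_cpow_half {z : ℂ} (hz : 0 ≤ z.re) :
    √(‖z‖ / 2) ≤ (z ^ (1 / 2 : ℂ)).re := by
  have harg : |z.arg| ≤ π / 2 := abs_arg_le_pi_div_two_iff.2 hz
  have hcos : √2 / 2 ≤ Real.cos (z.arg * (1 / 2)) := by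
    rw [← Real.cos_pi_div_four, ← Real.cos_abs (z.arg * (1 / 2))]
    refine Real.cos_le_cos_of_nonneg_of_le_pi (abs_nonneg _) (by linarith [Real.pi_pos]) ?_
    rw [abs_mul, abs_of_pos (by norm_num : (0 : ℝ) < 1 / 2)]
    linarith
  have hhalf : (1 / 2 : ℂ) = ((1 / 2 : ℝ) : ℂ) := by push_cast; rfl
  rw [hhalf, cpow_ofReal_re, ← Real.sqrt_eq_rpow, Real.sqrt_div (norm_nonneg _),
    div_eq_mul_inv, ← Real.sqrt_div_self]
  gcongr

theorem norm_heatLaplace_le {a : ℝ} {z : ℂ} (ha : 0 ≤ a) (hz : 0 ≤ z.re) {y : ℝ} (hy : 0 < y)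
    (hyz : 2 * π * y ≤ ‖z‖) :
    ‖heatLaplace a z‖ ≤ Real.exp (-(2 * √(π * a * y))) / √y := by
  have hneg : (-1 / 2 : ℂ) = ((-1 / 2 : ℝ) : ℂ) := by push_cast; rfl
  have hpow : √π * ‖z‖ ^ (-1 / 2 : ℝ) ≤ 1 / √y := by
    have hle : √π * √y ≤ √‖z‖ := by
      rw [← Real.sqrt_mul Real.pi_pos.le]
      exact Real.sqrt_le_sqrt (by linarith [mul_pos Real.pi_pos hy])
    rw [neg_div, Real.rpow_neg (norm_nonneg z), ← Real.sqrt_eq_rpow, ← div_eq_mul_inv,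
      div_le_div_iff₀ ((by positivity : 0 < √π * √y).trans_le hle) (by positivity), one_mul]
    exact hle
  have hexp : 2 * √(π * a * y) ≤ 2 * (√a * (z ^ (1 / 2 : ℂ)).re) := by
    have := sqrt_norm_div_two_le_re_cpow_half hz
    calc 2 * √(π * a * y) = 2 * (√a * √(π * y)) := by rw [← Real.sqrt_mul ha]; ring_nf
      _ ≤ 2 * (√a * √(‖z‖ / 2)) := by gcongr; linarith
      _ ≤ _ := by gcongr
  have hre : (-(2 * √a * z ^ (1 / 2 : ℂ)) : ℂ).re = -(2 * (√a * (z ^ (1 / 2 : ℂ)).re)) := by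
    rw [neg_re, mul_assoc, ← ofReal_ofNat, re_ofReal_mul, re_ofReal_mul]
  rw [heatLaplace, norm_mul, norm_mul, norm_exp, norm_real, Real.norm_of_nonneg (by positivity),
    hneg, norm_cpow_real, hre]
  exact (mul_le_mul hpow (Real.exp_le_exp.2 (neg_le_neg hexp)) (Real.exp_nonneg _)
    (by positivity)).trans_eq (one_div_mul_eq_div _ _)

theorem exp_neg_two_mul_sqrt_le (N : ℕ) {x : ℝ} (hx : 0 < x) :
    Real.exp (-(2 * √x)) ≤ (2 * N).factorial / (4 * x) ^ N := by
  have h := Real.pow_div_factorial_le_exp (x := 2 * √x) (by positivity) (2 * N)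
  rw [pow_mul, mul_pow, Real.sq_sqrt hx.le] at h
  rw [Real.exp_neg, inv_le_comm₀ (by positivity) (by positivity), inv_div]
  norm_num at h ⊢
  exact h

theorem exp_neg_two_mul_sqrt_div_sqrt_le (N : ℕ) {a y : ℝ} (ha : 0 < a) (hy : 0 < y) :
    Real.exp (-(2 * √(π * a * y))) / √y ≤
      (2 * N).factorial / (4 * π * a) ^ N * y ^ (-(N + 1 / 2) : ℝ) := by
  have hpow : y ^ (-(N + 1 / 2) : ℝ) = (y ^ N * √y)⁻¹ := by
    rw [Real.rpow_neg hy.le, Real.rpow_add hy, Real.rpow_natCast, Real.sqrt_eq_rpow]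
  calc Real.exp (-(2 * √(π * a * y))) / √y
      ≤ (2 * N).factorial / (4 * (π * a * y)) ^ N / √y := by
        gcongr
        exact exp_neg_two_mul_sqrt_le N (by positivity)
    _ = _ := by
        rw [hpow, show 4 * (π * a * y) = 4 * π * a * y by ring, mul_pow (4 * π * a) y]
        field_simp

theorem summable_exp_neg_sqrt_div_sqrt {a : ℝ} (ha : 0 < a) :
    Summable fun k : ℕ ↦ Real.exp (-(2 * √(π * a * (k + 1)))) / √(k + 1) :=
  .of_nonneg_of_le (fun k ↦ by positivity)
    (fun k ↦ exp_neg_two_mul_sqrt_div_sqrt_le 1 ha (by positivity))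
    ((summable_nat_add_one_rpow (by norm_num)).mul_left _)

theorem heatLaplace_sub_I_mul (a u : ℝ) {y : ℝ} (hy : y ≠ 0) :
    heatLaplace a (u - I * y) = conj (heatLaplace a (u + I * y)) := by
  have harg : (u + I * y : ℂ).arg ≠ π := fun h ↦ hy (by simpa using (arg_eq_pi_iff.1 h).2)
  have hconj : (u - I * y : ℂ) = conj (u + I * y : ℂ) := by simp [sub_eq_add_neg]
  have hcpow (r : ℝ) : (u - I * y : ℂ) ^ (r : ℂ) = conj ((u + I * y : ℂ) ^ (r : ℂ)) := by
    rw [hconj, conj_cpow _ _ harg, conj_ofReal]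
  have hneg := hcpow (-1 / 2)
  have hhalf := hcpow (1 / 2)
  push_cast at hneg hhalf
  rw [heatLaplace, heatLaplace, hneg, hhalf]
  simp only [map_mul, ← exp_conj, map_neg, conj_ofReal, map_ofNat]

theorem norm_heatLaplace_sub_I_mul (a u : ℝ) {y : ℝ} (hy : y ≠ 0) :
    ‖heatLaplace a (u - I * y)‖ = ‖heatLaplace a (u + I * y)‖ := by
  rw [heatLaplace_sub_I_mul a u hy, RCLike.norm_conj]

theorem norm_heatLaplace_two_pi_le {a u : ℝ} (ha : 0 ≤ a) (hu : 0 ≤ u) (k : ℕ) :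
    ‖heatLaplace a (u + I * (2 * π * (k + 1) : ℝ))‖ ≤
      Real.exp (-(2 * √(π * a * (k + 1)))) / √(k + 1) := by
  refine norm_heatLaplace_le ha (by simpa using hu) (by positivity) ?_
  exact (le_abs_self _).trans (by simpa using abs_im_le_norm (u + I * (2 * π * (k + 1) : ℝ) : ℂ))

theorem summable_heatLaplace_add {a u : ℝ} (ha : 0 < a) (hu : 0 ≤ u) :
    Summable fun k : ℕ ↦ heatLaplace a (u + I * (2 * π * (k + 1) : ℝ)) :=
  .of_norm_bounded (summable_exp_neg_sqrt_div_sqrt ha) (norm_heatLaplace_two_pi_le ha.le hu)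

theorem summable_heatLaplace_sub {a u : ℝ} (ha : 0 < a) (hu : 0 ≤ u) :
    Summable fun k : ℕ ↦ heatLaplace a (u - I * (2 * π * (k + 1) : ℝ)) := by
  refine .of_norm_bounded (summable_exp_neg_sqrt_div_sqrt ha) fun k ↦ ?_
  rw [norm_heatLaplace_sub_I_mul a u (by positivity)]
  exact norm_heatLaplace_two_pi_le ha.le hu k

theorem sumSubIntegral_heatKernel_mul_exp {a u : ℝ} (ha : 0 < a) (hu : 0 < u) :
    sumSubIntegral (fun t ↦ heatKernel a t * cexp (-(u * t))) =
      ∑' k : ℕ, (heatLaplace a (u + I * (2 * π * (k + 1) : ℝ)) +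
        heatLaplace a (u - I * (2 * π * (k + 1) : ℝ))) := by
  refine sumSubIntegral_mul_exp_eq_tsum_laplace (g := fun t ↦ (heatKernel a t : ℂ))
    (N := 1 / 2) (continuous_ofReal.comp_continuousOn (continuousOn_heatKernel ha))
    (by simp [heatKernel_zero_right]) ?_ (fun z hz ↦ integral_heatKernel_mul_cexp ha hz) hu
    (summable_heatLaplace_add ha hu.le) (summable_heatLaplace_sub ha hu.le)
  refine .of_bound a⁻¹ ?_
  filter_upwards [eventually_ge_atTop 0] with t ht
  rw [norm_real, Real.norm_of_nonneg (heatKernel_nonneg a t), ← Real.sqrt_eq_rpow,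
    Real.norm_of_nonneg (Real.sqrt_nonneg t), inv_mul_eq_div]
  exact heatKernel_le_sqrt_div ha ht

/-- The Poisson dual series of `∑_{n ≥ 1} heatKernel a n`: the sum of the Laplace transform
`heatLaplace a` over the nonzero points of `2πiℤ`. -/
noncomputable def heatDual (a : ℝ) : ℂ :=
  ∑' k : ℕ, (heatLaplace a (I * (2 * π * (k + 1) : ℝ)) +
    heatLaplace a (-(I * (2 * π * (k + 1) : ℝ))))

theorem tendsto_sumSubIntegral_heatKernel_mul_exp {a : ℝ} (ha : 0 < a) :
    Tendsto (fun u : ℝ ↦ sumSubIntegral fun t ↦ heatKernel a t * cexp (-(u * t))) (𝓝[>] 0)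
      (𝓝 (heatDual a)) := by
  have hlim {y : ℝ} (hy : y ≠ 0) :
      Tendsto (fun u : ℝ ↦ heatLaplace a (u + I * y)) (𝓝[>] 0) (𝓝 (heatLaplace a (I * y))) := by
    have hu : Tendsto (fun u : ℝ ↦ (u + I * y : ℂ)) (𝓝[>] 0) (𝓝 (I * y)) := by
      have : Continuous fun u : ℝ ↦ (u + I * y : ℂ) := by fun_prop
      simpa using (this.tendsto 0).mono_left nhdsWithin_le_nhds
    exact (differentiableAt_heatLaplace a (Or.inr (by simpa))).continuousAt.tendsto.comp hu
  have hbound : ∀ᶠ u : ℝ in 𝓝[>] 0, ∀ k : ℕ,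
      ‖heatLaplace a (u + I * (2 * π * (k + 1) : ℝ)) +
        heatLaplace a (u + I * (-(2 * π * (k + 1)) : ℝ))‖ ≤
      Real.exp (-(2 * √(π * a * (k + 1)))) / √(k + 1) +
        Real.exp (-(2 * √(π * a * (k + 1)))) / √(k + 1) := by
    filter_upwards [self_mem_nhdsWithin] with u (hu : 0 < u) k
    rw [ofReal_neg, mul_neg, ← sub_eq_add_neg]
    refine norm_add_le_of_le (norm_heatLaplace_two_pi_le ha.le hu.le k) ?_
    rw [norm_heatLaplace_sub_I_mul a u (by positivity)]
    exact norm_heatLaplace_two_pi_le ha.le hu.le k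
  have hdom := tendsto_tsum_of_dominated_convergence
    ((summable_exp_neg_sqrt_div_sqrt ha).add (summable_exp_neg_sqrt_div_sqrt ha))
    (fun k : ℕ ↦ (hlim (y := 2 * π * (k + 1)) (by positivity)).add
      (hlim (y := -(2 * π * (k + 1))) (neg_ne_zero.2 (by positivity)))) hbound
  simp only [ofReal_neg, mul_neg, ← sub_eq_add_neg] at hdom
  refine hdom.congr' ?_
  filter_upwards [self_mem_nhdsWithin] with u hu
  rw [sumSubIntegral_heatKernel_mul_exp ha hu]

theorem I_mul_ofReal_cpow_half {y : ℝ} (hy : 0 < y) :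
    (I * y) ^ (1 / 2 : ℂ) = (√(y / 2) : ℝ) * (1 + I) := by
  have hexp : cexp (π * (1 / 2) / 2 * I) = (√2 / 2 : ℝ) * (1 + I) := by
    rw [show (π * (1 / 2) / 2 * I : ℂ) = (π / 4 : ℝ) * I by push_cast; ring, exp_ofReal_mul_I,
      Real.cos_pi_div_four, Real.sin_pi_div_four]
    ring
  have hpow : (y : ℂ) ^ (1 / 2 : ℂ) = (√y : ℝ) := by
    rw [Real.sqrt_eq_rpow, ofReal_cpow hy.le]
    push_cast
    rfl
  rw [I_mul_ofReal_cpow hy, hexp, hpow, ← mul_assoc, ← ofReal_mul, Real.sqrt_div hy.le,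
    Real.sqrt_div_self', mul_one_div]

theorem heatLaplace_I_mul (a : ℝ) {y : ℝ} (hy : 0 < y) :
    heatLaplace a (I * y) =
      (√π / √y * Real.exp (-√(2 * a * y)) : ℝ) * cexp ((-(π / 4 + √(2 * a * y)) : ℝ) * I) := by
  have hpow : (y : ℂ) ^ (-1 / 2 : ℂ) = ((√y)⁻¹ : ℝ) := by
    rw [Real.sqrt_eq_rpow, ← Real.rpow_neg hy.le, ofReal_cpow hy.le]
    push_cast
    ring_nf
  have hsqrt : 2 * √a * √(y / 2) = √(2 * a * y) := by
    rw [show 2 * a * y = 2 ^ 2 * a * (y / 2) by ring, Real.sqrt_mul' _ (by positivity),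
      Real.sqrt_mul (by positivity), Real.sqrt_sq two_pos.le]
  rw [heatLaplace, I_mul_ofReal_cpow hy, hpow, I_mul_ofReal_cpow_half hy, ← hsqrt]
  push_cast
  rw [mul_assoc, mul_assoc _ (cexp _), ← exp_add, mul_assoc (_ / _), ← exp_add]
  ring_nf

theorem heatLaplace_I_mul_add_neg (a : ℝ) {y : ℝ} (hy : 0 < y) :
    heatLaplace a (I * y) + heatLaplace a (-(I * y)) =
      (2 * √π / √y * Real.exp (-√(2 * a * y)) * Real.sin (π / 4 - √(2 * a * y)) : ℝ) := by
  have hconj := heatLaplace_sub_I_mul a 0 hy.ne'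
  rw [ofReal_zero, zero_sub, zero_add] at hconj
  rw [hconj, add_conj, heatLaplace_I_mul a hy, re_ofReal_mul, exp_ofReal_mul_I_re, Real.cos_neg,
    ← Real.sin_pi_div_two_sub]
  push_cast
  ring_nf

theorem abs_exp_neg_sub_one_le {x : ℝ} (hx : 0 ≤ x) : |Real.exp (-x) - 1| ≤ x := by
  rw [abs_sub_comm, abs_of_nonneg (by simpa)]
  linarith [Real.one_sub_le_exp_neg x]

theorem abs_exp_neg_div_sub_one_div_sqrt_le {a t : ℝ} (ha : 0 ≤ a) (ht : 0 < t) :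
    |(Real.exp (-(a / t)) - 1) / √t| ≤ a * t ^ (-3 / 2 : ℝ) := by
  have hpow : t ^ (-3 / 2 : ℝ) = 1 / t / √t := by
    rw [Real.sqrt_eq_rpow, one_div, ← Real.rpow_neg_one, ← Real.rpow_sub ht]
    norm_num
  rw [abs_div, abs_of_nonneg (Real.sqrt_nonneg t), hpow, ← mul_div_assoc, mul_one_div]
  gcongr
  exact abs_exp_neg_sub_one_le (by positivity)

theorem integrableOn_exp_neg_div_sub_one_div_sqrt {a : ℝ} (ha : 0 ≤ a) :
    IntegrableOn (fun t ↦ (Real.exp (-(a / t)) - 1) / √t) (Set.Ioi 0) := by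
  have hmeas : Measurable fun t ↦ (Real.exp (-(a / t)) - 1) / √t := by fun_prop
  rw [← Set.Ioc_union_Ioi_eq_Ioi zero_le_one]
  refine .union ?_ ?_
  · have hint : IntegrableOn (fun t : ℝ ↦ t ^ (-1 / 2 : ℝ)) (Set.Ioc 0 1) :=
      (intervalIntegrable_iff_integrableOn_Ioc_of_le zero_le_one).1
        (intervalIntegral.intervalIntegrable_rpow' (by norm_num))
    refine hint.mono' hmeas.aestronglyMeasurable
      ((ae_restrict_iff' measurableSet_Ioc).2 (.of_forall fun t ht ↦ ?_))
    rw [neg_div, Real.rpow_neg ht.1.le, ← Real.sqrt_eq_rpow, ← one_div, norm_div,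
      Real.norm_of_nonneg (Real.sqrt_nonneg t), Real.norm_eq_abs, abs_sub_comm]
    have : 0 ≤ a / t := div_nonneg ha ht.1.le
    gcongr
    rw [abs_of_nonneg (by simpa)]
    linarith [Real.exp_pos (-(a / t))]
  · exact ((integrableOn_Ioi_rpow_of_lt (by norm_num) one_pos).const_mul a).mono'
      hmeas.aestronglyMeasurable ((ae_restrict_iff' measurableSet_Ioi).2 (.of_forall fun t ht ↦
        abs_exp_neg_div_sub_one_div_sqrt_le ha (one_pos.trans ht)))

theorem summable_exp_neg_div_sub_one_div_sqrt {a : ℝ} (ha : 0 ≤ a) :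
    Summable fun d : ℕ ↦ (Real.exp (-(a / (d + 1))) - 1) / √(d + 1) :=
  .of_norm_bounded ((summable_nat_add_one_rpow (by norm_num)).mul_left a)
    fun _ ↦ abs_exp_neg_div_sub_one_div_sqrt_le ha (by positivity)

theorem sumIntegrable_exp_neg_div_sub_one_div_sqrt {a : ℝ} (ha : 0 ≤ a) :
    SumIntegrable fun t ↦ ((Real.exp (-(a / t)) - 1) / √t : ℝ) where
  summable := by
    exact_mod_cast summable_ofReal.2 (summable_exp_neg_div_sub_one_div_sqrt ha)
  integrableOn := (integrableOn_exp_neg_div_sub_one_div_sqrt ha).ofReal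

theorem heatKernel_mul_exp_eq_add (a u : ℝ) {t : ℝ} (ht : 0 < t) :
    heatKernel a t * cexp (-(u * t)) =
      ((Real.exp (-(a / t)) - 1) / √t : ℝ) * cexp (-(u * t)) +
        (t : ℂ) ^ (1 / 2 - 1 : ℂ) * cexp (-(u * t)) := by
  have hpow : (t : ℂ) ^ (1 / 2 - 1 : ℂ) = (1 / √t : ℝ) := by
    rw [show (1 / 2 - 1 : ℂ) = (-(1 / 2) : ℝ) by norm_num, ← ofReal_cpow ht.le,
      Real.rpow_neg ht.le, ← Real.sqrt_eq_rpow, one_div]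
  rw [hpow, heatKernel, ← add_mul, ← ofReal_add, ← add_div, sub_add_cancel]

theorem tendsto_sqrt_pi_div_sqrt_mul_exp_sub_one (a : ℝ) :
    Tendsto (fun u ↦ √π / √u * (Real.exp (-(2 * √a * √u)) - 1)) (𝓝[>] 0)
      (𝓝 (-(2 * √(π * a)))) := by
  have hderiv : HasDerivAt (fun v ↦ Real.exp (-(2 * √a * v))) (-(2 * √a)) 0 := by
    simpa using (((hasDerivAt_id (0 : ℝ)).const_mul (2 * √a)).neg).exp
  have hsqrt : Tendsto (√·) (𝓝[>] 0) (𝓝[>] 0) := by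
    refine tendsto_nhdsWithin_iff.2 ⟨?_, ?_⟩
    · simpa using (Real.continuous_sqrt.tendsto 0).mono_left nhdsWithin_le_nhds
    · filter_upwards [self_mem_nhdsWithin] with u hu using Real.sqrt_pos.2 hu
  have hlim := (hderiv.tendsto_slope_zero_right.comp hsqrt).const_mul √π
  refine (hlim.congr fun u ↦ ?_).trans_eq ?_
  · simp
    ring
  · rw [Real.sqrt_mul Real.pi_pos.le]
    ring_nf

-- The kernel `t ↦ 1 / √t` is not integrable, so the integral is computed as the limit at
-- `u = 0⁺` of the difference of two Laplace transforms.
theorem integral_exp_neg_div_sub_one_div_sqrt {a : ℝ} (ha : 0 < a) :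
    ∫ t in Set.Ioi 0, (((Real.exp (-(a / t)) - 1) / √t : ℝ) : ℂ) = (-(2 * √(π * a)) : ℝ) := by
  have hf := sumIntegrable_exp_neg_div_sub_one_div_sqrt ha.le
  refine tendsto_nhds_unique (tendsto_integral_mul_exp hf.integrableOn)
    (((continuous_ofReal.tendsto _).comp
      (tendsto_sqrt_pi_div_sqrt_mul_exp_sub_one a)).congr' ?_)
  filter_upwards [self_mem_nhdsWithin] with u (hu : 0 < u)
  have hint := integral_heatKernel_mul_cexp ha (z := u) (by simpa)
  rw [setIntegral_congr_fun measurableSet_Ioi fun t ht ↦ heatKernel_mul_exp_eq_add a u ht,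
    integral_add (hf.mul_exp hu.le).integrableOn
      (sumIntegrable_cpow_mul_exp (by norm_num) hu).integrableOn,
    integral_cpow_mul_exp_neg_mul_Ioi (by norm_num) (by simpa), heatLaplace_ofReal a hu.le,
    ← eq_sub_iff_add_eq] at hint
  have hpow : (1 / u : ℂ) ^ (1 / 2 : ℂ) = (1 / √u : ℝ) := by
    rw [Real.sqrt_eq_rpow, one_div (u ^ _), ← Real.inv_rpow hu.le,
      ofReal_cpow (inv_nonneg.2 hu.le)]
    push_cast
    rw [one_div (u : ℂ)]
  have hGamma : Gamma (1 / 2) = (√π : ℝ) := by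
    rw [Complex.Gamma_one_half_eq, Real.sqrt_eq_rpow, ofReal_cpow Real.pi_pos.le]
    push_cast
    rfl
  rw [hint, hpow, hGamma, ← ofReal_mul, ← ofReal_sub, Function.comp_apply]
  ring_nf

theorem heatDual_eq_tsum_add {a : ℝ} (ha : 0 < a) :
    heatDual a = ∑' d : ℕ, (((Real.exp (-(a / (d + 1))) - 1) / √(d + 1) : ℝ) : ℂ) +
      riemannZeta (1 / 2) + (2 * √(π * a) : ℝ) := by
  have hre : 0 < (1 / 2 : ℂ).re := by norm_num
  have hf := sumIntegrable_exp_neg_div_sub_one_div_sqrt ha.le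
  have hlim := (tendsto_sumSubIntegral_mul_exp hf).add (tendsto_sumSubIntegral_cpow_mul_exp hre)
  have huniq := tendsto_nhds_unique ((tendsto_sumSubIntegral_heatKernel_mul_exp ha).congr' ?_) hlim
  · rw [huniq, sumSubIntegral, integral_exp_neg_div_sub_one_div_sqrt ha]
    norm_num
    ring
  · filter_upwards [self_mem_nhdsWithin] with u (hu : 0 < u)
    rw [← sumSubIntegral_add (hf.mul_exp hu.le) (sumIntegrable_cpow_mul_exp hre hu)]
    exact sumSubIntegral_congr fun t ht ↦ heatKernel_mul_exp_eq_add a u ht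

/-! ### The Mellin transform of the dual series -/

theorem hasMellin_cexp_neg_mul {s : ℝ} (hs : 0 < s) {z : ℂ} (hz : 0 < z.re) :
    HasMellin (fun t : ℝ ↦ cexp (-(z * t))) s (Gamma s * z ^ (-s : ℂ)) := by
  have hint := integral_rpow_mul_cexp_neg_mul_Ioi hs hz
  have hz0 : z ≠ 0 := fun h ↦ by simp [h] at hz
  refine ⟨Integrable.of_integral_ne_zero ?_, hint⟩
  simp only [smul_eq_mul, hint]
  exact mul_ne_zero (Gamma_ne_zero_of_re_pos (by simpa)) (cpow_ne_zero_iff.2 (.inl hz0))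

theorem cpow_half_cpow (z s : ℂ) : (z ^ (1 / 2 : ℂ)) ^ s = z ^ (s / 2) := by
  have him : (log z * (1 / 2)).im = z.arg / 2 := by
    rw [show (1 / 2 : ℂ) = ((1 / 2 : ℝ) : ℂ) by norm_num, im_mul_ofReal, log_im]
    ring
  rw [← cpow_mul _ (by rw [him]; linarith [neg_pi_lt_arg z, Real.pi_pos])
    (by rw [him]; linarith [arg_le_pi z, Real.pi_pos]), one_div_mul_eq_div]

theorem re_cpow_half_pos {z : ℂ} (hz : z ∈ slitPlane) : 0 < (z ^ (1 / 2 : ℂ)).re := by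
  obtain ⟨hpi, hz0⟩ := mem_slitPlane_iff_arg.1 hz
  have hlt := lt_of_le_of_ne (arg_le_pi z) hpi
  rw [show (1 / 2 : ℂ) = ((1 / 2 : ℝ) : ℂ) by norm_num, cpow_ofReal_re]
  have := norm_pos_iff.2 hz0
  refine mul_pos (by positivity) (Real.cos_pos_of_mem_Ioo ⟨?_, ?_⟩)
  · linarith [neg_pi_lt_arg z]
  · linarith

theorem hasMellin_heatLaplace {s : ℝ} (hs : 0 < s) {z : ℂ} (hz : z ∈ slitPlane) :
    HasMellin (heatLaplace · z) s (Gamma s * Gamma (s + 1 / 2) * z ^ (-(s + 1 / 2) : ℂ)) := by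
  have hz0 : z ≠ 0 := slitPlane_ne_zero hz
  have hexp := hasMellin_cexp_neg_mul (s := s / (1 / 2)) (by positivity)
    (z := 2 * z ^ (1 / 2 : ℂ)) (by simpa [← one_div] using re_cpow_half_pos hz)
  rw [ofReal_div] at hexp
  have hsqrt : HasMellin (fun a : ℝ ↦ cexp (-(2 * z ^ (1 / 2 : ℂ) * (a ^ (1 / 2 : ℝ) : ℝ)))) s _ :=
    ⟨(MellinConvergent.comp_rpow (by norm_num)).2 hexp.1,
      (mellin_comp_rpow _ _ _).trans (congrArg _ hexp.2)⟩
  have hsmul := hasMellin_const_smul hsqrt.1 (√π * z ^ (-1 / 2 : ℂ))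
  convert hsmul using 1
  · ext a
    rw [heatLaplace, Real.sqrt_eq_rpow a, smul_eq_mul]
    ring_nf
  · have htwo : (2 : ℂ) ^ (1 - 2 * s : ℂ) = 2 * 2 ^ (-(2 * s) : ℂ) := by
      rw [sub_eq_add_neg, cpow_add _ _ two_ne_zero, cpow_one]
    have hz' : z ^ (-(s + 1 / 2) : ℂ) = z ^ (-1 / 2 : ℂ) * z ^ (-s : ℂ) := by
      rw [← cpow_add _ _ hz0]
      ring_nf
    have hpow : (2 * z ^ (1 / 2 : ℂ)) ^ (-(2 * s) : ℂ) = 2 ^ (-(2 * s) : ℂ) * z ^ (-s : ℂ) := by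
      have := ofReal_mul_cpow_of_pos two_pos (z ^ (1 / 2 : ℂ)) (-(2 * s))
      rw [ofReal_ofNat] at this
      rw [this, cpow_half_cpow]
      ring_nf
    have hdiv : (s / (1 / 2 : ℝ) : ℂ) = 2 * s := by
      push_cast
      ring
    rw [hsqrt.2, hdiv, hpow, Gamma_mul_Gamma_add_half, htwo, hz']
    norm_num
    ring

theorem norm_heatLaplace_add_neg_le {a : ℝ} (ha : 0 ≤ a) (k : ℕ) :
    ‖heatLaplace a (I * (2 * π * (k + 1) : ℝ)) + heatLaplace a (-(I * (2 * π * (k + 1) : ℝ)))‖ ≤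
      2 * (Real.exp (-(2 * √(π * a * (k + 1)))) / √(k + 1)) := by
  have hadd := norm_heatLaplace_two_pi_le ha le_rfl k
  have hsub := norm_heatLaplace_sub_I_mul a 0 (y := 2 * π * (k + 1)) (by positivity)
  rw [ofReal_zero, zero_add] at hadd
  rw [ofReal_zero, zero_add, zero_sub] at hsub
  exact (norm_add_le_of_le hadd (hsub.trans_le hadd)).trans_eq (two_mul _).symm

theorem exists_norm_heatDual_le {N : ℕ} (hN : 1 ≤ N) :
    ∃ C, ∀ a > 0, ‖heatDual a‖ ≤ C * a ^ (-N : ℝ) := by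
  have hN' : (1 : ℝ) ≤ N := by exact_mod_cast hN
  have hsum := summable_nat_add_one_rpow (p := -(N + 1 / 2)) (by linarith)
  refine ⟨2 * ((2 * N).factorial / (4 * π) ^ N * ∑' k : ℕ, (k + 1 : ℝ) ^ (-(N + 1 / 2) : ℝ)),
    fun a ha ↦ ?_⟩
  calc ‖heatDual a‖
      ≤ ∑' k : ℕ, 2 * ((2 * N).factorial / (4 * π * a) ^ N * (k + 1 : ℝ) ^ (-(N + 1 / 2) : ℝ)) :=
        tsum_of_norm_bounded ((hsum.mul_left _).mul_left _).hasSum fun k ↦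
          (norm_heatLaplace_add_neg_le ha.le k).trans
            (by gcongr; exact exp_neg_two_mul_sqrt_div_sqrt_le N ha (by positivity))
    _ = _ := by
        rw [tsum_mul_left, tsum_mul_left, Real.rpow_neg ha.le, Real.rpow_natCast, mul_pow _ a]
        ring

theorem continuous_heatLaplace_left (z : ℂ) : Continuous (heatLaplace · z) := by
  unfold heatLaplace
  fun_prop

theorem continuousOn_heatDual : ContinuousOn heatDual (Set.Ioi 0) := by
  intro a (ha : 0 < a)
  refine (ContinuousOn.continuousAt (s := Set.Ici (a / 2)) ?_
    (Ici_mem_nhds (half_lt_self ha))).continuousWithinAt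
  refine continuousOn_tsum (fun k ↦ ((continuous_heatLaplace_left _).add
      (continuous_heatLaplace_left _)).continuousOn)
    ((summable_exp_neg_sqrt_div_sqrt (half_pos ha)).mul_left 2)
    fun k b (hb : a / 2 ≤ b) ↦ (norm_heatLaplace_add_neg_le (by linarith) k).trans ?_
  gcongr

theorem heatDual_isBigO_one : heatDual =O[𝓝[>] 0] (fun _ ↦ (1 : ℝ)) := by
  have hsum := summable_nat_add_one_rpow (p := -3 / 2) (by norm_num)
  refine .of_bound ((∑' d : ℕ, (d + 1 : ℝ) ^ (-3 / 2 : ℝ)) + ‖riemannZeta (1 / 2)‖ + 2 * √π) ?_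
  filter_upwards [Ioc_mem_nhdsGT one_pos] with a ⟨ha, ha1⟩
  rw [heatDual_eq_tsum_add ha, norm_one, mul_one]
  refine norm_add_le_of_le
    (norm_add_le_of_le (tsum_of_norm_bounded hsum.hasSum fun d ↦ ?_) le_rfl) ?_
  · rw [norm_real]
    exact (abs_exp_neg_div_sub_one_div_sqrt_le ha.le (by positivity)).trans
      (mul_le_of_le_one_left (by positivity) ha1)
  · rw [norm_real, Real.norm_of_nonneg (by positivity)]
    gcongr
    exact mul_le_of_le_one_right Real.pi_pos.le ha1

theorem heatDual_isBigO_rpow_neg {N : ℕ} (hN : 1 ≤ N) :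
    heatDual =O[atTop] (· ^ (-N : ℝ)) := by
  obtain ⟨C, hC⟩ := exists_norm_heatDual_le hN
  refine .of_bound C ?_
  filter_upwards [eventually_gt_atTop 0] with a ha
  rw [Real.norm_of_nonneg (by positivity)]
  exact hC a ha

theorem locallyIntegrableOn_heatDual : LocallyIntegrableOn heatDual (Set.Ioi 0) :=
  continuousOn_heatDual.locallyIntegrableOn measurableSet_Ioi

theorem exists_heatDual_isBigO_rpow_neg (r : ℝ) : ∃ a > r, heatDual =O[atTop] (· ^ (-a)) := by
  obtain ⟨N, hN⟩ := exists_nat_gt (max r 1)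
  obtain ⟨hr, h1⟩ := max_lt_iff.1 hN
  exact ⟨N, hr, heatDual_isBigO_rpow_neg (by exact_mod_cast h1.le)⟩

theorem mellinConvergent_heatDual {s : ℂ} (hs : 0 < s.re) : MellinConvergent heatDual s := by
  obtain ⟨a, ha, hO⟩ := exists_heatDual_isBigO_rpow_neg s.re
  exact mellinConvergent_of_isBigO_rpow locallyIntegrableOn_heatDual hO ha
    (b := 0) (by simpa using heatDual_isBigO_one) hs

theorem differentiableOn_mellin_heatDual :
    DifferentiableOn ℂ (mellin heatDual) {s | 0 < s.re} := fun s hs ↦ by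
  obtain ⟨a, ha, hO⟩ := exists_heatDual_isBigO_rpow_neg s.re
  exact (mellin_differentiableAt_of_isBigO_rpow locallyIntegrableOn_heatDual hO ha
    (b := 0) (by simpa using heatDual_isBigO_one) hs).differentiableWithinAt

theorem integral_norm_cpow_smul_comp_mul_left {E : Type*} [NormedAddCommGroup E] [NormedSpace ℂ E]
    (φ : ℝ → E) (s : ℂ) {b : ℝ} (hb : 0 < b) :
    ∫ t in Set.Ioi (0 : ℝ), ‖(t : ℂ) ^ (s - 1) • φ (b * t)‖ =
      ‖(b : ℂ) ^ (-s)‖ * ∫ t in Set.Ioi (0 : ℝ), ‖(t : ℂ) ^ (s - 1) • φ t‖ := by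
  have hcongr : ∀ t ∈ Set.Ioi (0 : ℝ), ‖(t : ℂ) ^ (s - 1) • φ (b * t)‖ =
      b ^ (1 - s.re) * ‖((b * t : ℝ) : ℂ) ^ (s - 1) • φ (b * t)‖ := fun t (ht : 0 < t) ↦ by
    rw [norm_smul, norm_smul, norm_cpow_eq_rpow_re_of_pos ht,
      norm_cpow_eq_rpow_re_of_pos (mul_pos hb ht), Real.mul_rpow hb.le ht.le, sub_re, one_re,
      ← neg_sub s.re 1, Real.rpow_neg hb.le]
    field_simp
  rw [setIntegral_congr_fun measurableSet_Ioi hcongr, integral_const_mul,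
    integral_comp_mul_left_Ioi (fun u : ℝ ↦ ‖(u : ℂ) ^ (s - 1) • φ u‖) 0 hb, mul_zero,
    norm_cpow_eq_rpow_re_of_pos hb, smul_eq_mul, ← mul_assoc, ← Real.rpow_neg_one,
    ← Real.rpow_add hb, neg_re]
  ring_nf

theorem hasSum_mellin_comp_nat_mul {E : Type*} [NormedAddCommGroup E] [NormedSpace ℂ E]
    {φ : ℝ → E} {s : ℂ} (hφ : MellinConvergent φ s) {c : ℕ → ℂ}
    (hc : Summable fun k ↦ ‖c k * (k + 1 : ℂ) ^ (-s)‖) :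
    HasSum (fun k ↦ (c k * (k + 1 : ℂ) ^ (-s)) • mellin φ s)
      (mellin (fun t ↦ ∑' k, c k • φ ((k + 1) * t)) s) := by
  have hpos (k : ℕ) : (0 : ℝ) < k + 1 := by positivity
  have hmellin (k : ℕ) : ∫ t in Set.Ioi (0 : ℝ), (t : ℂ) ^ (s - 1) • c k • φ ((k + 1) * t) =
      (c k * (k + 1 : ℂ) ^ (-s)) • mellin φ s := by
    have := mellin_const_smul (fun t ↦ φ ((k + 1) * t)) s (c k)
    rw [mellin_comp_mul_left φ s (hpos k), smul_smul] at this
    exact_mod_cast this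
  have hint (k : ℕ) : IntegrableOn (fun t : ℝ ↦ (t : ℂ) ^ (s - 1) • c k • φ ((k + 1) * t))
      (Set.Ioi 0) :=
    ((MellinConvergent.comp_mul_left (hpos k)).2 hφ).const_smul (c k)
  have hnorm (k : ℕ) : ∫ t in Set.Ioi (0 : ℝ), ‖(t : ℂ) ^ (s - 1) • c k • φ ((k + 1) * t)‖ =
      ‖c k * (k + 1 : ℂ) ^ (-s)‖ * ∫ t in Set.Ioi (0 : ℝ), ‖(t : ℂ) ^ (s - 1) • φ t‖ := by
    have hk := integral_norm_cpow_smul_comp_mul_left φ s (hpos k)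
    push_cast at hk
    rw [norm_mul, mul_assoc, ← hk, ← integral_const_mul]
    exact setIntegral_congr_fun measurableSet_Ioi fun t _ ↦ by
      simp only [norm_smul]
      ring
  have := hasSum_integral_of_summable_integral_norm hint (by
    simp only [hnorm]
    exact hc.mul_right _)
  simp only [hmellin, tsum_const_smul''] at this
  exact this

theorem heatLaplace_mul (a : ℝ) {b : ℝ} (hb : 0 < b) (z : ℂ) :
    heatLaplace a (b * z) = (b : ℂ) ^ (-1 / 2 : ℂ) * heatLaplace (b * a) z := by
  have hsqrt : (√(b * a) : ℂ) = (b : ℂ) ^ (1 / 2 : ℂ) * √a := by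
    rw [Real.sqrt_mul hb.le, Real.sqrt_eq_rpow b]
    push_cast [ofReal_cpow hb.le]
    rfl
  rw [heatLaplace, heatLaplace, ofReal_mul_cpow_of_pos hb, ofReal_mul_cpow_of_pos hb, hsqrt]
  ring_nf

theorem heatDual_eq_tsum_comp_mul (a : ℝ) :
    heatDual a = ∑' k : ℕ, (k + 1 : ℂ) ^ (-1 / 2 : ℂ) *
      (heatLaplace ((k + 1) * a) (I * (2 * π : ℝ)) +
        heatLaplace ((k + 1) * a) (-(I * (2 * π : ℝ)))) := by
  refine tsum_congr fun k ↦ ?_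
  have hk : (0 : ℝ) < k + 1 := by positivity
  have hadd := heatLaplace_mul a hk (I * (2 * π : ℝ))
  have hneg := heatLaplace_mul a hk (-(I * (2 * π : ℝ)))
  push_cast at hadd hneg ⊢
  rw [mul_add (_ ^ _), ← hadd, ← hneg]
  congr 2 <;> ring

theorem hasMellin_heatLaplace_I_mul_add_neg {s : ℝ} (hs : 0 < s) {y : ℝ} (hy : 0 < y) :
    HasMellin (fun a ↦ heatLaplace a (I * y) + heatLaplace a (-(I * y))) s
      (Gamma s * Gamma (s + 1 / 2) *
        (2 * cos (π * (s + 1 / 2) / 2) * (y : ℂ) ^ (-(s + 1 / 2) : ℂ))) := by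
  have hadd := hasMellin_heatLaplace hs (z := I * y) (by simp [mem_slitPlane_iff, hy.ne'])
  have hneg := hasMellin_heatLaplace hs (z := -(I * y)) (by simp [mem_slitPlane_iff, hy.ne'])
  have hsum := hasMellin_add hadd.1 hneg.1
  have hpow := pairedPow_zero_left (s + 1 / 2) hy
  rw [pairedPow, ofReal_zero, zero_add, zero_sub, sub_eq_zero] at hpow
  rwa [hadd.2, hneg.2, ← mul_add, hpow] at hsum

theorem mellin_heatDual_ofReal {s : ℝ} (hs : 1 < s) :
    mellin heatDual s = Gamma s * riemannZeta (1 / 2 - s) := by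
  have hφ := hasMellin_heatLaplace_I_mul_add_neg (by linarith : 0 < s) Real.two_pi_pos
  have hterm (k : ℕ) : (k + 1 : ℂ) ^ (-1 / 2 : ℂ) * (k + 1 : ℂ) ^ (-s : ℂ) =
      (k + 1 : ℂ) ^ (-(s + 1 / 2) : ℂ) := by
    rw [← cpow_add _ _ (by exact_mod_cast k.succ_ne_zero)]
    ring_nf
  have hnorm (k : ℕ) : ‖(k + 1 : ℂ) ^ (-(s + 1 / 2) : ℂ)‖ = (k + 1 : ℝ) ^ (-(s + 1 / 2)) := by
    have := norm_cpow_eq_rpow_re_of_pos (x := k + 1) (by positivity) (-(s + 1 / 2))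
    push_cast at this
    simpa using this
  have hsum := (hasSum_mellin_comp_nat_mul hφ.1
    ((summable_nat_add_one_rpow (p := -(s + 1 / 2)) (by linarith)).congr fun k ↦ by
      rw [hterm, hnorm])).tsum_eq
  have hre : 1 < (s + 1 / 2 : ℂ).re := by
    norm_num
    linarith
  have hzeta := Gamma_mul_tsum_two_mul_cos_mul_cpow_neg hre
  rw [show (1 - (s + 1 / 2) : ℂ) = 1 / 2 - s by ring] at hzeta
  rw [funext heatDual_eq_tsum_comp_mul, ← hzeta, ← mul_assoc, ← tsum_mul_left]
  refine hsum.symm.trans (tsum_congr fun k ↦ ?_)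
  have hmul := ofReal_mul_cpow_of_pos Real.two_pi_pos (k + 1) (-(s + 1 / 2))
  rw [hterm, hφ.2, smul_eq_mul]
  push_cast at hmul ⊢
  rw [hmul]
  ring

theorem mellin_heatDual {s : ℂ} (hs : 0 < s.re) :
    mellin heatDual s = Gamma s * riemannZeta (1 / 2 - s) :=
  eqOn_re_pos_of_eq_ofReal differentiableOn_mellin_heatDual
    (differentiableOn_Gamma_re_pos.fun_mul (differentiableOn_riemannZeta_sub (by norm_num)))
    (fun _ ↦ mellin_heatDual_ofReal) hs

/-! ### Summation against the dual series -/

theorem sumIntegrable_cpow_mul_heatDual {s : ℂ} (hs : 0 < s.re) {c : ℝ} (hc : 0 < c) :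
    SumIntegrable fun t ↦ (t : ℂ) ^ (s - 1) * heatDual (c * t) where
  summable := by
    obtain ⟨N, hN⟩ := exists_nat_gt (max s.re 1)
    obtain ⟨hsN, h1⟩ := max_lt_iff.1 hN
    obtain ⟨C, hC⟩ := exists_norm_heatDual_le (N := N) (by exact_mod_cast h1.le)
    refine .of_norm_bounded ((summable_nat_add_one_rpow (p := s.re - 1 - N)
      (by linarith)).mul_left (C * c ^ (-N : ℝ))) fun n ↦ ?_
    have hn : (0 : ℝ) < n + 1 := by positivity
    have hdual := hC (c * (n + 1)) (by positivity)
    rw [norm_mul, norm_cpow_eq_rpow_re_of_pos hn, sub_eq_add_neg _ (N : ℝ), Real.rpow_add hn]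
    rw [Real.mul_rpow hc.le hn.le] at hdual
    calc _ ≤ (n + 1 : ℝ) ^ (s - 1).re * (C * (c ^ (-N : ℝ) * (n + 1 : ℝ) ^ (-N : ℝ))) := by gcongr
      _ = _ := by
        rw [sub_re, one_re]
        ring
  integrableOn := (MellinConvergent.comp_mul_left hc).2 (mellinConvergent_heatDual hs)

theorem sumSubIntegral_cpow_mul_heatDual {s : ℂ} (hs : 0 < s.re) {c : ℝ} (hc : 0 < c) :
    sumSubIntegral (fun t ↦ (t : ℂ) ^ (s - 1) * heatDual (c * t)) =
      ∑' n : ℕ, (n + 1 : ℂ) ^ (s - 1) * heatDual (c * (n + 1)) -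
        (c : ℂ) ^ (-s) * (Gamma s * riemannZeta (1 / 2 - s)) := by
  have hmellin := mellin_comp_mul_left heatDual s hc
  rw [mellin_heatDual hs] at hmellin
  rw [sumSubIntegral]
  simp only [← smul_eq_mul] at hmellin ⊢
  rw [← hmellin, mellin]
  push_cast
  rfl

/-- The `d`-th term of the expansion of `t ↦ t ^ (s - 1) * heatDual (c * t) * exp (-(u * t))`
obtained from `heatDual_eq_tsum_add`. -/
noncomputable def heatDualTerm (s : ℂ) (c u : ℝ) (d : ℕ) (t : ℝ) : ℂ :=
  ((√(d + 1))⁻¹ : ℝ) * ((t : ℂ) ^ (s - 1) * cexp (-((u + c / (d + 1) : ℝ) * t)) +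
    -1 * ((t : ℂ) ^ (s - 1) * cexp (-(u * t))))

theorem heatDualTerm_eq (s : ℂ) (c u : ℝ) (d : ℕ) (t : ℝ) :
    heatDualTerm s c u d t =
      ((Real.exp (-(c * t / (d + 1))) - 1) / √(d + 1) : ℝ) *
        ((t : ℂ) ^ (s - 1) * cexp (-(u * t))) := by
  have hexp : cexp (-((u + c / (d + 1) : ℝ) * t)) =
      cexp (-(c * t / (d + 1))) * cexp (-(u * t)) := by
    rw [← exp_add]
    push_cast
    ring_nf
  rw [heatDualTerm, hexp]
  push_cast
  ring

theorem norm_heatDualTerm_le (s : ℂ) {c : ℝ} (hc : 0 ≤ c) (u : ℝ) (d : ℕ) {t : ℝ} (ht : 0 < t) :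
    ‖heatDualTerm s c u d t‖ ≤
      c * (d + 1 : ℝ) ^ (-3 / 2 : ℝ) * ‖(t : ℂ) ^ (s + 1 - 1) * cexp (-(u * t))‖ := by
  have habs := abs_exp_neg_div_sub_one_div_sqrt_le (a := c * t) (t := d + 1) (by positivity)
    (by positivity)
  rw [heatDualTerm_eq, norm_mul, norm_real, Real.norm_eq_abs, add_sub_right_comm,
    cpow_add _ _ (ofReal_ne_zero.2 ht.ne'), cpow_one, mul_right_comm (_ ^ _), norm_mul _ (t : ℂ),
    norm_real, Real.norm_of_nonneg ht.le]
  exact (mul_le_mul_of_nonneg_right habs (norm_nonneg _)).trans_eq (by ring)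

theorem sumSubIntegral_heatDualTerm {s : ℂ} (hs : 0 < s.re) {c u : ℝ} (hc : 0 ≤ c) (hu : 0 < u)
    (d : ℕ) :
    sumSubIntegral (heatDualTerm s c u d) =
      Gamma s * (((√(d + 1))⁻¹ : ℝ) *
        (pairedPowSeries s (u + c / (d + 1)) - pairedPowSeries s u)) := by
  have hu' : 0 < u + c / (d + 1) := by positivity
  unfold heatDualTerm
  rw [sumSubIntegral_const_mul, sumSubIntegral_add (sumIntegrable_cpow_mul_exp hs hu')
    ((sumIntegrable_cpow_mul_exp hs hu).const_mul _), sumSubIntegral_const_mul,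
    sumSubIntegral_cpow_mul_exp_eq hs hu', sumSubIntegral_cpow_mul_exp_eq hs hu]
  ring

theorem sumSubIntegral_tsum_heatDualTerm {s : ℂ} (hs : 0 < s.re) {c u : ℝ} (hc : 0 ≤ c)
    (hu : 0 < u) :
    sumSubIntegral (fun t ↦ ∑' d, heatDualTerm s c u d t) =
      Gamma s * ∑' d : ℕ, ((√(d + 1))⁻¹ : ℝ) *
        (pairedPowSeries s (u + c / (d + 1)) - pairedPowSeries s u) := by
  have hs' : 0 < (s + 1).re := by
    rw [add_re, one_re]
    positivity
  rw [sumSubIntegral_tsum (sumIntegrable_cpow_mul_exp hs' hu) (fun d ↦ ?_)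
    ((summable_nat_add_one_rpow (by norm_num)).mul_left c)
    fun d t ht ↦ norm_heatDualTerm_le s hc u d ht, ← tsum_mul_left]
  · simp only [sumSubIntegral_heatDualTerm hs hc hu]
  · unfold heatDualTerm
    fun_prop

theorem tsum_heatDualTerm (s : ℂ) {c t : ℝ} (hc : 0 < c) (ht : 0 < t) (u : ℝ) :
    ∑' d, heatDualTerm s c u d t =
      (t : ℂ) ^ (s - 1) * heatDual (c * t) * cexp (-(u * t)) +
        (-riemannZeta (1 / 2) * ((t : ℂ) ^ (s - 1) * cexp (-(u * t))) +
          -(2 * √(π * c) : ℝ) * ((t : ℂ) ^ (s + 1 / 2 - 1) * cexp (-(u * t)))) := by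
  have hpow : (t : ℂ) ^ (s + 1 / 2 - 1) = √t * (t : ℂ) ^ (s - 1) := by
    rw [Real.sqrt_eq_rpow, ofReal_cpow ht.le, ← cpow_add _ _ (ofReal_ne_zero.2 ht.ne')]
    push_cast
    ring_nf
  simp only [heatDualTerm_eq]
  rw [tsum_mul_right, heatDual_eq_tsum_add (mul_pos hc ht), hpow, ← mul_assoc π,
    Real.sqrt_mul (mul_pos Real.pi_pos hc).le]
  push_cast
  ring

theorem sumSubIntegral_cpow_mul_heatDual_mul_exp {s : ℂ} (hs : 0 < s.re) {c u : ℝ} (hc : 0 < c)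
    (hu : 0 < u) :
    sumSubIntegral (fun t ↦ (t : ℂ) ^ (s - 1) * heatDual (c * t) * cexp (-(u * t))) =
      Gamma s * ∑' d : ℕ, ((√(d + 1))⁻¹ : ℝ) *
        (pairedPowSeries s (u + c / (d + 1)) - pairedPowSeries s u) +
      riemannZeta (1 / 2) * sumSubIntegral (fun t ↦ (t : ℂ) ^ (s - 1) * cexp (-(u * t))) +
      (2 * √(π * c) : ℝ) *
        sumSubIntegral (fun t ↦ (t : ℂ) ^ (s + 1 / 2 - 1) * cexp (-(u * t))) := by
  have hs' : 0 < (s + 1 / 2).re := by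
    norm_num
    positivity
  have hζ := (sumIntegrable_cpow_mul_exp hs hu).const_mul (-riemannZeta (1 / 2))
  have hsqrt := (sumIntegrable_cpow_mul_exp hs' hu).const_mul (-(2 * √(π * c) : ℝ))
  rw [← sumSubIntegral_tsum_heatDualTerm hs hc.le hu,
    sumSubIntegral_congr fun t ht ↦ tsum_heatDualTerm s hc ht u,
    sumSubIntegral_add ((sumIntegrable_cpow_mul_heatDual hs hc).mul_exp hu.le) (hζ.add hsqrt),
    sumSubIntegral_add hζ hsqrt, sumSubIntegral_const_mul, sumSubIntegral_const_mul]
  ring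

theorem tendsto_tsum_pairedPowSeries_sub {s : ℂ} (hs : 0 < s.re) {c : ℝ} (hc : 0 ≤ c) :
    Tendsto (fun u : ℝ ↦ ∑' d : ℕ, ((√(d + 1))⁻¹ : ℝ) *
        (pairedPowSeries s (u + c / (d + 1)) - pairedPowSeries s u)) (𝓝[>] 0)
      (𝓝 (∑' d : ℕ, ((√(d + 1))⁻¹ : ℝ) * pairedPowSeries s (c / (d + 1)))) := by
  obtain ⟨K, hK⟩ := exists_norm_pairedPowSeries_sub_le hs
  have hzero := tendsto_pairedPowSeries_add hs le_rfl
  simp only [add_zero, pairedPowSeries_zero] at hzero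
  refine tendsto_tsum_of_dominated_convergence
    ((summable_nat_add_one_rpow (p := -3 / 2) (by norm_num)).mul_left (K * c)) (fun d ↦ ?_) ?_
  · have := ((tendsto_pairedPowSeries_add hs (x := c / (d + 1)) (by positivity)).sub
      hzero).const_mul (((√(d + 1))⁻¹ : ℝ) : ℂ)
    rwa [sub_zero] at this
  · filter_upwards [self_mem_nhdsWithin] with u (hu : 0 < u) d
    have hd : (0 : ℝ) < d + 1 := by positivity
    have hLip := hK (u + c / (d + 1)) (by positivity) u hu.le
    rw [add_sub_cancel_left, abs_of_nonneg (by positivity)] at hLip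
    have hpow : (d + 1 : ℝ) ^ (-3 / 2 : ℝ) = (√(d + 1))⁻¹ * (d + 1 : ℝ)⁻¹ := by
      rw [Real.sqrt_eq_rpow, ← Real.rpow_neg hd.le, ← Real.rpow_neg_one, ← Real.rpow_add hd]
      norm_num
    rw [norm_mul, norm_real, Real.norm_of_nonneg (by positivity)]
    calc _ ≤ (√(d + 1))⁻¹ * (K * (c / (d + 1))) := by gcongr
      _ = _ := by rw [hpow]; ring

theorem tsum_cpow_mul_heatDual {s : ℂ} (hs : 0 < s.re) {c : ℝ} (hc : 0 < c) :
    ∑' n : ℕ, (n + 1 : ℂ) ^ (s - 1) * heatDual (c * (n + 1)) =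
      Gamma s * ∑' d : ℕ, ((√(d + 1))⁻¹ : ℝ) * pairedPowSeries s (c / (d + 1)) +
        riemannZeta (1 / 2) * riemannZeta (1 - s) +
        ((2 * √(π * c) : ℝ) + Gamma s * (c : ℂ) ^ (-s)) * riemannZeta (1 / 2 - s) := by
  have hs' : 0 < (s + 1 / 2).re := by
    norm_num
    positivity
  have hlim := (((tendsto_tsum_pairedPowSeries_sub hs hc.le).const_mul (Gamma s)).add
    ((tendsto_sumSubIntegral_cpow_mul_exp hs).const_mul (riemannZeta (1 / 2)))).add
    ((tendsto_sumSubIntegral_cpow_mul_exp hs').const_mul (((2 * √(π * c) : ℝ) : ℂ)))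
  have huniq := tendsto_nhds_unique
    (tendsto_sumSubIntegral_mul_exp (sumIntegrable_cpow_mul_heatDual hs hc)) (hlim.congr' ?_)
  · rw [sumSubIntegral_cpow_mul_heatDual hs hc, sub_eq_iff_eq_add,
      show 1 - (s + 1 / 2) = 1 / 2 - s by ring] at huniq
    rw [huniq]
    ring
  · filter_upwards [self_mem_nhdsWithin] with u hu
    exact (sumSubIntegral_cpow_mul_heatDual_mul_exp hs hc hu).symm

/-! ### Regrouping by divisors -/

theorem tsum_tsum_rpow_mul_eq_tsum_rsigma_mul {r : ℝ} {g : ℕ → ℂ}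
    (h : Summable fun p : ℕ × ℕ ↦ ((p.1 + 1 : ℝ) ^ r : ℝ) * g ((p.1 + 1) * (p.2 + 1))) :
    ∑' d : ℕ, ∑' k : ℕ, ((d + 1 : ℝ) ^ r : ℝ) * g ((d + 1) * (k + 1)) =
      ∑' n : ℕ, rsigma r (n + 1) * g (n + 1) := by
  let G : ℕ+ × ℕ+ → ℂ := fun q ↦ ((q.1 : ℝ) ^ r : ℝ) * g (q.1 * q.2)
  let e := Equiv.pnatEquivNat.symm.prodCongr Equiv.pnatEquivNat.symm
  have hG (p : ℕ × ℕ) :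
      ((p.1 + 1 : ℝ) ^ r : ℝ) * g ((p.1 + 1) * (p.2 + 1)) = G (e p) := by
    simp [G, e]
  have hfiber (n : ℕ+) (b : Nat.divisorsAntidiagonal n) :
      G (sigmaAntidiagonalEquivProd ⟨n, b⟩) = ((b.1.1 : ℝ) ^ r : ℝ) * g n := by
    simp [G, sigmaAntidiagonalEquivProd, divisorsAntidiagonalFactors,
      (Nat.mem_divisorsAntidiagonal.1 b.2).1]
  have he : Summable (G ∘ e) := h.congr hG
  have hsum : Summable fun q ↦ G (sigmaAntidiagonalEquivProd q) :=
    sigmaAntidiagonalEquivProd.summable_iff.2 (e.summable_iff.1 he)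
  rw [← h.tsum_prod, tsum_congr hG, e.tsum_eq, ← sigmaAntidiagonalEquivProd.tsum_eq,
    hsum.tsum_sigma, ← tsum_pnat_eq_tsum_succ (f := fun n ↦ rsigma r n * g n)]
  refine tsum_congr fun n ↦ ?_
  simp_rw [tsum_fintype, hfiber]
  rw [← sum_mul, rsigma, univ_eq_attach,
    sum_attach _ fun x : ℕ × ℕ ↦ (((x.1 : ℝ) ^ r : ℝ) : ℂ),
    Nat.sum_divisorsAntidiagonal fun d _ ↦ (((d : ℝ) ^ r : ℝ) : ℂ), ofReal_sum]

theorem inv_sqrt_mul_pairedPow_div {s : ℝ} (x : ℝ) (d k : ℕ) :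
    ((√(d + 1))⁻¹ : ℝ) * pairedPow s (2 * π * x / (d + 1)) (2 * π * (k + 1)) =
      ((2 * π) ^ (-s) : ℝ) *
        (((d + 1 : ℝ) ^ (s - 1 / 2) : ℝ) * pairedPow s x ((d + 1) * (k + 1))) := by
  have hd : (0 : ℝ) < d + 1 := by positivity
  have hscale := pairedPow_mul s (a := 2 * π / (d + 1)) (by positivity) x
    (y := (d + 1) * (k + 1)) (by positivity)
  have hx : 2 * π / (d + 1) * x = 2 * π * x / (d + 1) := by ring
  have hy : 2 * π / (d + 1) * ((d + 1) * (k + 1)) = 2 * π * (k + 1) := by field_simp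
  have hpow : (√(d + 1))⁻¹ * (2 * π / (d + 1)) ^ (-s) =
      (2 * π) ^ (-s) * (d + 1 : ℝ) ^ (s - 1 / 2) := by
    rw [Real.div_rpow (by positivity) hd.le, Real.rpow_neg hd.le, Real.rpow_sub hd,
      ← Real.sqrt_eq_rpow]
    field_simp
  rw [hx, hy, ← ofReal_neg, ← ofReal_cpow (by positivity)] at hscale
  rw [hscale, ← mul_assoc, ← ofReal_mul, hpow, ofReal_mul, mul_assoc]

theorem summable_rpow_mul_pairedPow {s : ℝ} (hs : 0 < s) {x : ℝ} (hx : 0 < x) :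
    Summable fun p : ℕ × ℕ ↦
      ((p.1 + 1 : ℝ) ^ (s - 1 / 2) : ℝ) * pairedPow s x ((p.1 + 1) * (p.2 + 1)) := by
  have hne : (((2 * π) ^ (-s) : ℝ) : ℂ) ≠ 0 := ofReal_ne_zero.2 (by positivity)
  rw [← summable_mul_left_iff hne]
  have hsum := (summable_nat_add_one_rpow (p := -3 / 2) (by norm_num)).mul_of_nonneg
    (summable_nat_add_one_rpow (p := -s - 1) (by linarith)) (fun _ ↦ by positivity)
    (fun _ ↦ by positivity)
  refine .of_norm_bounded (hsum.mul_left (2 * (‖(s : ℂ)‖ *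
    Real.exp (π / 2 * |(s : ℂ).im|)) * (2 * π * x))) fun ⟨d, k⟩ ↦ ?_
  have hle := norm_pairedPow_two_pi_le (s := s) (u := 2 * π * x / (d + 1)) hs.le le_rfl
    (by positivity) k
  have hpow : (d + 1 : ℝ) ^ (-3 / 2 : ℝ) = (√(d + 1))⁻¹ / (d + 1) := by
    rw [Real.sqrt_eq_rpow, ← Real.rpow_neg (by positivity), ← Real.rpow_sub_one (by positivity)]
    norm_num
  rw [← inv_sqrt_mul_pairedPow_div, norm_mul, norm_real, Real.norm_of_nonneg (by positivity),
    hpow]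
  refine (mul_le_mul_of_nonneg_left hle (by positivity)).trans_eq ?_
  ring

theorem tsum_inv_sqrt_mul_pairedPowSeries {s : ℝ} (hs : 0 < s) {x : ℝ} (hx : 0 < x) :
    ∑' d : ℕ, ((√(d + 1))⁻¹ : ℝ) * pairedPowSeries s (2 * π * x / (d + 1)) =
      ((2 * π) ^ (-s) : ℝ) * ∑' n : ℕ, rsigma (s - 1 / 2) (n + 1) * pairedPow s x (n + 1) := by
  have hregroup := tsum_tsum_rpow_mul_eq_tsum_rsigma_mul (r := s - 1 / 2)
    (g := fun n ↦ pairedPow s x n) (by simpa using summable_rpow_mul_pairedPow hs hx)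
  push_cast at hregroup
  simp_rw [pairedPowSeries, ← tsum_mul_left, inv_sqrt_mul_pairedPow_div, tsum_mul_left]
  rw [← hregroup]
  simp_rw [tsum_mul_left]

theorem rpow_mul_heatLaplace_add_neg (s x : ℝ) (d k : ℕ) :
    ((d + 1 : ℝ) ^ (s - 1) : ℝ) * (heatLaplace (2 * π * x * (d + 1)) (I * (2 * π * (k + 1) : ℝ)) +
        heatLaplace (2 * π * x * (d + 1)) (-(I * (2 * π * (k + 1) : ℝ)))) =
      (√2 : ℝ) * (((d + 1 : ℝ) ^ (s - 1 / 2) : ℝ) *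
        ((Real.exp (-(2 * π * √(2 * ((d + 1) * (k + 1)) * x))) /
          √((d + 1) * (k + 1)) *
            Real.sin (π / 4 - 2 * π * √(2 * ((d + 1) * (k + 1)) * x)) : ℝ) : ℂ)) := by
  have hd : (0 : ℝ) < d + 1 := by positivity
  have hsqrt : √(2 * (2 * π * x * (d + 1)) * (2 * π * (k + 1))) =
      2 * π * √(2 * ((d + 1) * (k + 1)) * x) := by
    rw [show 2 * (2 * π * x * (d + 1)) * (2 * π * (k + 1)) =
      (2 * π) ^ 2 * (2 * ((d + 1) * (k + 1)) * x) by ring, Real.sqrt_mul (by positivity),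
      Real.sqrt_sq (by positivity)]
  have hpow : (d + 1 : ℝ) ^ (s - 1 / 2) = (d + 1 : ℝ) ^ (s - 1) * √(d + 1) := by
    rw [Real.sqrt_eq_rpow, ← Real.rpow_add hd]
    ring_nf
  have hcoeff : 2 * √π / √(2 * π * (k + 1)) = √2 / √(k + 1) := by
    rw [Real.sqrt_mul (by positivity), Real.sqrt_mul two_pos.le]
    field_simp
    rw [Real.sq_sqrt two_pos.le]
  rw [heatLaplace_I_mul_add_neg _ (by positivity), hsqrt, hcoeff, hpow, Real.sqrt_mul hd.le]
  simp only [← ofReal_mul]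
  congr 1
  field_simp

theorem summable_rpow_mul_heatLaplace_add_neg (s : ℝ) {c : ℝ} (hc : 0 < c) :
    Summable fun p : ℕ × ℕ ↦ ((p.1 + 1 : ℝ) ^ (s - 1) : ℝ) *
      (heatLaplace (c * (p.1 + 1)) (I * (2 * π * (p.2 + 1) : ℝ)) +
        heatLaplace (c * (p.1 + 1)) (-(I * (2 * π * (p.2 + 1) : ℝ)))) := by
  obtain ⟨N, hN⟩ := exists_nat_gt (max s 1)
  obtain ⟨hsN, h1⟩ := max_lt_iff.1 hN
  have hsum := (summable_nat_add_one_rpow (p := s - 1 - N) (by linarith)).mul_of_nonneg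
    (summable_nat_add_one_rpow (p := -(N + 1 / 2)) (by linarith)) (fun _ ↦ by positivity)
    (fun _ ↦ by positivity)
  refine .of_norm_bounded (hsum.mul_left (2 * ((2 * N).factorial / (4 * π * c) ^ N)))
    fun ⟨d, k⟩ ↦ ?_
  have hd : (0 : ℝ) < d + 1 := by positivity
  have hexp := exp_neg_two_mul_sqrt_div_sqrt_le N (a := c * (d + 1)) (y := k + 1)
    (by positivity) (by positivity)
  have hle := (norm_heatLaplace_add_neg_le (a := c * (d + 1)) (by positivity) k).trans
    (mul_le_mul_of_nonneg_left hexp two_pos.le)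
  rw [norm_mul, norm_real, Real.norm_of_nonneg (by positivity), Real.rpow_sub_natCast hd.ne']
  refine (mul_le_mul_of_nonneg_left hle (by positivity)).trans_eq ?_
  rw [← mul_assoc (4 * π), mul_pow _ (d + 1 : ℝ)]
  field_simp

theorem tsum_cpow_mul_heatDual_eq_tsum_rsigma (s : ℝ) {x : ℝ} (hx : 0 < x) :
    ∑' n : ℕ, (n + 1 : ℂ) ^ (s - 1 : ℂ) * heatDual (2 * π * x * (n + 1)) =
      (√2 : ℝ) * ∑' n : ℕ, ((rsigma (s - 1 / 2) (n + 1) / √(n + 1) *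
        Real.exp (-(2 * π * √(2 * (n + 1) * x))) *
          Real.sin (π / 4 - 2 * π * √(2 * (n + 1) * x)) : ℝ) : ℂ) := by
  have hsum := summable_rpow_mul_heatLaplace_add_neg s (c := 2 * π * x) (by positivity)
  simp_rw [rpow_mul_heatLaplace_add_neg] at hsum
  rw [summable_mul_left_iff (by simp)] at hsum
  have hregroup := tsum_tsum_rpow_mul_eq_tsum_rsigma_mul (r := s - 1 / 2)
    (g := fun n ↦ ((Real.exp (-(2 * π * √(2 * n * x))) / √n *
      Real.sin (π / 4 - 2 * π * √(2 * n * x)) : ℝ) : ℂ)) (by exact_mod_cast hsum)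
  have hcpow (n : ℕ) : (n + 1 : ℂ) ^ (s - 1 : ℂ) = ((n + 1 : ℝ) ^ (s - 1) : ℝ) := by
    rw [ofReal_cpow (by positivity)]
    push_cast
    rfl
  simp_rw [hcpow, heatDual, ← tsum_mul_left, rpow_mul_heatLaplace_add_neg]
  simp_rw [tsum_mul_left]
  simp_rw [tsum_mul_left, ← ofReal_mul] at hregroup
  push_cast at hregroup ⊢
  rw [hregroup]
  congr! 3 with n
  ring

theorem pairedPow_two_mul_add_one (m : ℕ) (x y : ℝ) :
    pairedPow (2 * m + 1 : ℝ) x y =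
      (x - I * y) ^ (-(2 * (m : ℤ) + 1)) + (x + I * y) ^ (-(2 * (m : ℤ) + 1)) := by
  have hcos : cos (π * (2 * m + 1 : ℝ) / 2) = 0 :=
    cos_eq_zero_iff.2 ⟨m, by push_cast; ring⟩
  have hexp : (-(2 * m + 1 : ℝ) : ℂ) = ((-(2 * (m : ℤ) + 1) : ℤ) : ℂ) := by
    push_cast
    rfl
  rw [pairedPow, hcos, hexp, cpow_intCast, cpow_intCast]
  ring

theorem sqrt_pi_div_two_pi_rpow (s : ℝ) :
    √π / (2 * π) ^ (s + 1 / 2) = (2 * π) ^ (-s) / √2 := by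
  rw [Real.rpow_add (by positivity), ← Real.sqrt_eq_rpow, Real.sqrt_mul two_pos.le,
    Real.rpow_neg (by positivity)]
  field_simp

theorem coalescence_minus_general (s : ℝ) (hs : 0 < s) (x : ℝ) (hx : 0 < x) :
    ∑' n : ℕ, ((rsigma (s - 1 / 2) (n + 1) / √(n + 1) *
        Real.exp (-(2 * π * √(2 * (n + 1) * x))) *
          Real.sin (π / 4 - 2 * π * √(2 * (n + 1) * x)) : ℝ) : ℂ) =
      (2 * π * √x + Real.Gamma s / (√2 * (2 * π * x) ^ s) : ℝ) * riemannZeta (1 / 2 - s) +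
        1 / (√2 : ℝ) * riemannZeta (1 / 2) * riemannZeta (1 - s) +
        (√π * Real.Gamma s / (2 * π) ^ (s + 1 / 2) : ℝ) *
          ∑' n : ℕ, rsigma (s - 1 / 2) (n + 1) * pairedPow s x (n + 1) := by
  have h2 : ((√2 : ℝ) : ℂ) ≠ 0 := by simp
  have hsqrt : 2 * √(π * (2 * π * x)) = √2 * (2 * π * √x) := by
    rw [show π * (2 * π * x) = π ^ 2 * (2 * x) by ring, Real.sqrt_mul (by positivity),
      Real.sqrt_sq (by positivity), Real.sqrt_mul two_pos.le]
    ring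
  have hpow : ((2 * π * x : ℝ) : ℂ) ^ (-s : ℂ) = (((2 * π * x) ^ s)⁻¹ : ℝ) := by
    rw [← Real.rpow_neg (by positivity), ofReal_cpow (by positivity), ofReal_neg]
  have hmain := tsum_cpow_mul_heatDual (s := s) (by simpa) (c := 2 * π * x) (by positivity)
  rw [tsum_cpow_mul_heatDual_eq_tsum_rsigma s hx, tsum_inv_sqrt_mul_pairedPowSeries hs hx, hsqrt,
    hpow, Gamma_ofReal] at hmain
  refine mul_left_cancel₀ h2 (hmain.trans ?_)
  rw [mul_div_right_comm, sqrt_pi_div_two_pi_rpow]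
  push_cast
  field_simp
  ring

end

theorem coalescence_minus (m : ℕ) (x : ℝ) (hx : 0 < x) :
    (∑' n : ℕ, ((rsigma (2 * m + 1 / 2) (n + 1) / Real.sqrt ((n : ℝ) + 1) *
        Real.exp (-(2 * π * Real.sqrt (2 * ((n : ℝ) + 1) * x))) *
        Real.sin (π / 4 - 2 * π * Real.sqrt (2 * ((n : ℝ) + 1) * x)) : ℝ) : ℂ))
    = ((2 * π * Real.sqrt x +
          (Nat.factorial (2 * m) : ℝ) / (Real.sqrt 2 * (2 * π * x) ^ (2 * m + 1)) : ℝ) : ℂ) *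
        riemannZeta (-1 / 2 - 2 * m)
      + (1 / (Real.sqrt 2 : ℂ)) * riemannZeta (1 / 2) * riemannZeta (-2 * m)
      + ((Real.sqrt π * (Nat.factorial (2 * m) : ℝ) /
            (2 * π) ^ (2 * (m : ℝ) + 3 / 2) : ℝ) : ℂ) *
        ∑' n : ℕ,
          ((rsigma (2 * m + 1 / 2) (n + 1) : ℝ) : ℂ) *
            (((x : ℂ) - Complex.I * ((n : ℂ) + 1)) ^ (-(2 * (m : ℤ) + 1)) +
              ((x : ℂ) + Complex.I * ((n : ℂ) + 1)) ^ (-(2 * (m : ℤ) + 1))) := by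
  have h := coalescence_minus_general (2 * m + 1) (by positivity) x hx
  have hGamma : Real.Gamma (2 * m + 1) = (2 * m).factorial := by
    exact_mod_cast Real.Gamma_nat_eq_factorial (2 * m)
  have hpow : (2 * π * x) ^ (2 * m + 1 : ℝ) = (2 * π * x) ^ (2 * m + 1) := by
    exact_mod_cast Real.rpow_natCast (2 * π * x) (2 * m + 1)
  have hr : (2 * m + 1 - 1 / 2 : ℝ) = 2 * m + 1 / 2 := by ring
  have hexp : (2 * m + 1 + 1 / 2 : ℝ) = 2 * m + 3 / 2 := by ring
  have hzeta : (1 / 2 - (2 * m + 1 : ℝ) : ℂ) = -1 / 2 - 2 * m := by push_cast; ring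
  have hzeta' : (1 - (2 * m + 1 : ℝ) : ℂ) = -2 * m := by push_cast; ring
  simp only [hGamma, hpow, hr, hexp, hzeta, hzeta', pairedPow_two_mul_add_one] at h
  exact_mod_cast h
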